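/- Let ε > 0. There exist constants C > 0 and N such that for all integers n ≥ N and all positive integers k with k ≤ n^{1/8−ε}, one has | MP_k(n) − (π/16) k n^{−3/2} e^{π√n/√2} | ≤ C k³ n^{−7/4} e^{π√n/√2}. -/

import Mathlib

open Finset Real

/-- The number of partitions of `m` in which odd parts are not repeated. -/
noncomputable def podCount (m : ℕ) : ℕ :=
  Nat.card {P : Nat.Partition m // ∀ i ∈ P.parts, Odd i → P.parts.count i ≤ 1}

/-- The function `pod` extended to integers, vanishing for negative arguments. -/
noncomputable def podZ (m : ℤ) : ℤ := if 0 ≤ m then (podCount m.toNat : ℤ) else 0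

/-- The Andrews–Merca function `MP_k(n)`. -/
noncomputable def MP (k : ℕ) (n : ℤ) : ℤ :=
  (-1) ^ (k - 1) * ∑ j ∈ Finset.range k,
    (-1) ^ j * (podZ (n - (j : ℤ) * (2 * j + 1)) - podZ (n - ((j : ℤ) + 1) * (2 * j + 1)))

/-!
Writing `φ(q) = ∏ (1 - qⁿ)`, the generating function of `pod` is `φ(q²) / (φ(q) φ(q⁴))`. The
transformation law of Dedekind's `η` turns it, for `q = e⁻ᶻ`, into
`√(z / π) exp (π² / (8 z) - z / 8)` times its own value at `exp (-π² / z)`. This determines it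
near `q = 1`, and the circle method on the line `Re z = x` through the saddle point
`x = π / √(8 n)` gives `pod(n) - pod(n - 1) = F(n) + O(n ^ (-7/4) exp (π √(n / 2)))` with
`F(n) = (π / 16) n ^ (-3/2) exp (π √(n / 2))`: the arc `|Im z| ≤ x` is a Laplace integral, and on
the rest of the circle the product formula saves a factor `exp (-1 / (70 x))`.

The `j`-th term of `MP_k(n)` telescopes into `2 j + 1` first differences of `pod`, taken within
`2 k²` of `n`, where `F` is nearly constant. The main term is therefore `F(n)` times
`(-1)ᵏ⁻¹ ∑ (-1)ʲ (2 j + 1) = k`.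
-/

open Filter Topology

/-! ### Evaluating the generating function of partitions -/

section Evaluation

open PowerSeries

variable {𝕜 : Type*} [RCLike 𝕜]

/-- The real power series `p` converges at `x`, with sum `a`. -/
def HasEvalAt (p : ℝ⟦X⟧) (x a : 𝕜) : Prop := HasSum (fun n ↦ coeff n p • x ^ n) a

namespace HasEvalAt

lemma one (x : 𝕜) : HasEvalAt 1 x 1 := by
  simpa only [HasEvalAt, coeff_one, ite_smul, one_smul, zero_smul, pow_zero]
    using (hasSum_ite_eq 0 (1 : 𝕜)).congr_fun fun n ↦ by split_ifs with h <;> simp [h]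

lemma mul {p r : ℝ⟦X⟧} {x a b : 𝕜} (hp : HasEvalAt p x a) (hr : HasEvalAt r x b) :
    HasEvalAt (p * r) x (a * b) := by
  have hcauchy (n : ℕ) : coeff n (p * r) • x ^ n = ∑ kl ∈ antidiagonal n,
      (coeff kl.1 p • x ^ kl.1) * (coeff kl.2 r • x ^ kl.2) := by
    rw [coeff_mul, sum_smul]
    refine sum_congr rfl fun kl hkl ↦ ?_
    rw [smul_mul_smul_comm, ← pow_add, mem_antidiagonal.mp hkl]
  have hp' := summable_norm_iff.mpr hp.summable
  have hr' := summable_norm_iff.mpr hr.summable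
  unfold HasEvalAt
  simp_rw [hcauchy]
  rw [← hp.tsum_eq, ← hr.tsum_eq, tsum_mul_tsum_eq_tsum_sum_antidiagonal_of_summable_norm hp' hr']
  exact (summable_norm_sum_mul_antidiagonal_of_summable_norm hp' hr').of_norm.hasSum

lemma prod {ι : Type*} {p : ι → ℝ⟦X⟧} {x : 𝕜} {a : ι → 𝕜} (h : ∀ i, HasEvalAt (p i) x (a i))
    (s : Finset ι) : HasEvalAt (∏ i ∈ s, p i) x (∏ i ∈ s, a i) := by
  classical
  induction s using Finset.induction_on with
  | empty => exact one x
  | insert i s hi ih => rw [prod_insert hi, prod_insert hi]; exact (h i).mul ih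

end HasEvalAt

variable {ι : Type*} {p : ι → ℝ⟦X⟧}

lemma coeff_prod_nonneg (hp : ∀ i n, 0 ≤ coeff n (p i)) (s : Finset ι) (n : ℕ) :
    0 ≤ coeff n (∏ i ∈ s, p i) := by
  classical
  rw [coeff_prod]
  exact sum_nonneg fun l _ ↦ prod_nonneg fun i _ ↦ hp i _

lemma monotone_coeff_prod (hp : ∀ i n, 0 ≤ coeff n (p i)) (hp0 : ∀ i, coeff 0 (p i) = 1) (n : ℕ) :
    Monotone fun s : Finset ι ↦ coeff n (∏ i ∈ s, p i) := by
  classical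
  intro s t hst
  dsimp only
  rw [← prod_sdiff hst, mul_comm, coeff_mul]
  have h0 : coeff 0 (∏ i ∈ t \ s, p i) = 1 := by
    simp only [coeff_zero_eq_constantCoeff_apply, map_prod] at hp0 ⊢
    exact prod_eq_one fun i _ ↦ hp0 i
  calc coeff n (∏ i ∈ s, p i)
      = coeff n (∏ i ∈ s, p i) * coeff 0 (∏ i ∈ t \ s, p i) := by rw [h0, mul_one]
    _ ≤ _ := single_le_sum
        (f := fun kl : ℕ × ℕ ↦ coeff kl.1 (∏ i ∈ s, p i) * coeff kl.2 (∏ i ∈ t \ s, p i))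
        (fun kl _ ↦ mul_nonneg (coeff_prod_nonneg hp _ _) (coeff_prod_nonneg hp _ _))
        (a := (n, 0)) (by simp)

open PowerSeries.WithPiTopology in
lemma coeff_prod_le_of_hasProd {P : ℝ⟦X⟧} (hP : HasProd p P) (hp : ∀ i n, 0 ≤ coeff n (p i))
    (hp0 : ∀ i, coeff 0 (p i) = 1) (s : Finset ι) (n : ℕ) :
    coeff n (∏ i ∈ s, p i) ≤ coeff n P :=
  (monotone_coeff_prod hp hp0 n).ge_of_tendsto
    ((tendsto_iff_coeff_tendsto ℝ _ _ _).mp hP n) s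

open PowerSeries.WithPiTopology in
lemma summable_coeff_of_hasProd {P : ℝ⟦X⟧} (hP : HasProd p P) (hp : ∀ i n, 0 ≤ coeff n (p i))
    (hp0 : ∀ i, coeff 0 (p i) = 1) {r : ℝ} (hr : 0 ≤ r) {b : ι → ℝ} (hb : Summable b)
    (hpb : ∀ i, HasEvalAt (p i) r (1 + b i)) : Summable fun n ↦ coeff n P * r ^ n := by
  have hterm (s : Finset ι) (n : ℕ) : 0 ≤ coeff n (∏ i ∈ s, p i) * r ^ n :=
    mul_nonneg (coeff_prod_nonneg hp s n) (pow_nonneg hr n)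
  have hb0 (i : ι) : 0 ≤ b i := by
    have := le_hasSum (hpb i) 0 fun n _ ↦ mul_nonneg (hp i n) (pow_nonneg hr n)
    simpa [hp0 i] using this
  have hbound (s t) : ∑ n ∈ t, coeff n (∏ i ∈ s, p i) * r ^ n ≤ rexp (∑' i, b i) := calc
    _ ≤ ∏ i ∈ s, (1 + b i) :=
        sum_le_hasSum t (fun n _ ↦ hterm s n) (HasEvalAt.prod hpb s)
    _ ≤ rexp (∑ i ∈ s, b i) := Real.prod_one_add_le_exp_sum s hb0
    _ ≤ rexp (∑' i, b i) := exp_le_exp.mpr (hb.sum_le_tsum s fun i _ ↦ hb0 i)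
  refine summable_of_sum_le (c := rexp (∑' i, b i)) (fun n ↦ ?_) fun t ↦ ?_
  · simpa using (hterm ∅ n).trans
      (mul_le_mul_of_nonneg_right (coeff_prod_le_of_hasProd hP hp hp0 ∅ n) (pow_nonneg hr n))
  · exact le_of_tendsto (tendsto_finsetSum t fun n _ ↦
      ((tendsto_iff_coeff_tendsto ℝ _ _ _).mp hP n).mul_const _)
      (Eventually.of_forall fun s ↦ hbound s t)

open PowerSeries.WithPiTopology in
theorem hasEvalAt_of_hasProd {P : ℝ⟦X⟧} (hP : HasProd p P) (hp : ∀ i n, 0 ≤ coeff n (p i))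
    (hp0 : ∀ i, coeff 0 (p i) = 1) {x : 𝕜} {a : ι → 𝕜} (ha : ∀ i, HasEvalAt (p i) x (a i))
    {b : ι → ℝ} (hb : Summable b) (hpb : ∀ i, HasEvalAt (p i) ‖x‖ (1 + b i)) {A : 𝕜}
    (hA : HasProd a A) : HasEvalAt P x A := by
  have hsum := summable_coeff_of_hasProd hP hp hp0 (norm_nonneg x) hb hpb
  have hP0 (n : ℕ) : 0 ≤ coeff n P := by
    simpa using (coeff_prod_nonneg hp ∅ n).trans (coeff_prod_le_of_hasProd hP hp hp0 ∅ n)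
  have hlim : Tendsto (fun s : Finset ι ↦ ∑' n, coeff n (∏ i ∈ s, p i) • x ^ n) atTop
      (𝓝 (∑' n, coeff n P • x ^ n)) := by
    refine tendsto_tsum_of_dominated_convergence hsum
      (fun n ↦ ((tendsto_iff_coeff_tendsto ℝ _ _ _).mp hP n).smul_const _)
      (Eventually.of_forall fun s n ↦ ?_)
    rw [norm_smul, norm_pow, Real.norm_of_nonneg (coeff_prod_nonneg hp s n)]
    exact mul_le_mul_of_nonneg_right (coeff_prod_le_of_hasProd hP hp hp0 s n) (by positivity)
  have hval : ∑' n, coeff n P • x ^ n = A :=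
    tendsto_nhds_unique (hlim.congr fun s ↦ (HasEvalAt.prod ha s).tsum_eq) hA
  refine hval ▸ (Summable.of_norm ?_).hasSum
  simpa only [norm_smul, norm_pow, Real.norm_of_nonneg (hP0 _)] using hsum

open PowerSeries.WithPiTopology in
lemma coeff_genFun_factor (f : ℕ → ℕ → ℝ) (i n : ℕ) :
    coeff n (1 + ∑' j, f (i + 1) (j + 1) • (X : ℝ⟦X⟧) ^ ((i + 1) * (j + 1))) =
      if n = 0 then 1 else if i + 1 ∣ n then f (i + 1) (n / (i + 1)) else 0 := by
  rw [map_add, (Nat.Partition.summable_genFun_term f i).map_tsum _ (continuous_coeff _ _)]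
  simp only [coeff_one, map_smul, coeff_X_pow, smul_eq_mul, mul_ite, mul_one, mul_zero]
  rcases eq_or_ne n 0 with rfl | hn
  · simp
  simp only [hn, if_false, zero_add]
  split_ifs with hdvd
  · obtain ⟨c, rfl⟩ := hdvd
    obtain ⟨d, rfl⟩ := Nat.exists_eq_add_one_of_ne_zero (right_ne_zero_of_mul hn)
    rw [tsum_eq_single d fun j hj ↦ if_neg fun h ↦ hj ?_, if_pos rfl,
      Nat.mul_div_cancel_left _ i.succ_pos]
    exact (Nat.succ_injective (Nat.eq_of_mul_eq_mul_left i.succ_pos h)).symm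
  · refine (tsum_congr fun j ↦ if_neg ?_).trans tsum_zero
    rintro rfl
    exact hdvd (dvd_mul_right _ _)

open PowerSeries.WithPiTopology in
lemma hasEvalAt_genFun_factor (f : ℕ → ℕ → ℝ) (i : ℕ) {x a : 𝕜}
    (ha : HasSum (fun j ↦ f (i + 1) (j + 1) • (x ^ (i + 1)) ^ (j + 1)) a) :
    HasEvalAt (1 + ∑' j, f (i + 1) (j + 1) • (X : ℝ⟦X⟧) ^ ((i + 1) * (j + 1))) x (1 + a) := by
  have hinj : Function.Injective fun j : ℕ ↦ (i + 1) * (j + 1) := fun j k hjk ↦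
    Nat.succ_injective (Nat.eq_of_mul_eq_mul_left i.succ_pos hjk)
  let g (n : ℕ) : 𝕜 :=
    (if n = 0 then (0 : ℝ) else if i + 1 ∣ n then f (i + 1) (n / (i + 1)) else 0) • x ^ n
  have hg : HasSum g a := by
    refine (hinj.hasSum_iff fun n hn ↦ ?_).mp (ha.congr_fun fun j ↦ ?_)
    · by_cases h0 : n = 0
      · simp [g, h0]
      · have : ¬ i + 1 ∣ n := by
          rintro ⟨c, rfl⟩
          obtain ⟨d, rfl⟩ := Nat.exists_eq_add_one_of_ne_zero (right_ne_zero_of_mul h0)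
          exact hn ⟨d, rfl⟩
        simp [g, this]
    · simp [g, ← pow_mul]
  refine ((HasEvalAt.one x).add hg).congr_fun fun n ↦ ?_
  rw [coeff_genFun_factor, coeff_one, ← add_smul]
  split_ifs <;> simp

end Evaluation

/-! ### The generating function of `pod` -/

section PodGeneratingFunction

lemma multipliable_one_sub {ι R : Type*} [NormedCommRing R] [NormOneClass R] [CompleteSpace R]
    {w : ι → R} (hw : Summable fun i ↦ ‖w i‖) : Multipliable fun i ↦ 1 - w i := by
  simpa only [sub_eq_add_neg] using
    multipliable_one_add_of_summable (f := fun i ↦ -w i) (by simpa only [norm_neg] using hw)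

lemma one_sub_ne_zero_of_norm_lt_one {R : Type*} [NormedRing R] [NormOneClass R] {w : R}
    (hw : ‖w‖ < 1) : 1 - w ≠ 0 :=
  sub_ne_zero.mpr fun h ↦ by simp [← h] at hw

lemma tprod_one_sub_ne_zero {ι R : Type*} [NormedCommRing R] [NormOneClass R] [NormMulClass R]
    [CompleteSpace R] {w : ι → R} (hw : Summable fun i ↦ ‖w i‖) (hw1 : ∀ i, ‖w i‖ < 1) :
    ∏' i, (1 - w i) ≠ 0 := by
  simpa only [sub_eq_add_neg] using tprod_one_add_ne_zero_of_summable (f := fun i ↦ -w i)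
    (fun i ↦ by simpa only [← sub_eq_add_neg] using one_sub_ne_zero_of_norm_lt_one (hw1 i))
    (by simpa only [norm_neg] using hw)

lemma norm_pow_succ_lt_one {R : Type*} [NormedRing R] {x : R} (hx : ‖x‖ < 1) (n : ℕ) :
    ‖x ^ (n + 1)‖ < 1 :=
  (norm_pow_le' x n.succ_pos).trans_lt (pow_lt_one₀ (norm_nonneg x) hx n.succ_ne_zero)

/-- Euler's product `∏ (1 - q ^ n)` over `n ≥ 1`. -/
noncomputable def eulerPhi (q : ℂ) : ℂ := ∏' n : ℕ, (1 - q ^ (n + 1))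

/-- The product `∏ (1 - q ^ n)` over odd `n`. -/
noncomputable def oddPhi (q : ℂ) : ℂ := ∏' n : ℕ, (1 - q ^ (2 * n + 1))

/-- The generating function of the partitions in which odd parts are not repeated. -/
noncomputable def podGF (q : ℂ) : ℂ := ∑' n, (podCount n : ℂ) * q ^ n

/-- The weight of a part `i` of multiplicity `c`: a partition has nonzero total weight exactly when
its odd parts are not repeated. -/
noncomputable def podWeight (i c : ℕ) : ℝ := if Odd i ∧ 2 ≤ c then 0 else 1

variable {q : ℂ}

lemma summable_norm_pow_succ (hq : ‖q‖ < 1) : Summable fun n : ℕ ↦ ‖q ^ (n + 1)‖ := by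
  simp only [norm_pow]
  exact (summable_nat_add_iff 1).mpr (summable_geometric_of_lt_one (norm_nonneg q) hq)

lemma summable_norm_pow_odd (hq : ‖q‖ < 1) : Summable fun n : ℕ ↦ ‖q ^ (2 * n + 1)‖ :=
  (summable_norm_pow_succ hq).comp_injective (mul_right_injective₀ (two_ne_zero (α := ℕ)))

lemma eulerPhi_ne_zero (hq : ‖q‖ < 1) : eulerPhi q ≠ 0 :=
  tprod_one_sub_ne_zero (summable_norm_pow_succ hq) (fun i ↦ norm_pow_succ_lt_one hq i)

lemma oddPhi_ne_zero (hq : ‖q‖ < 1) : oddPhi q ≠ 0 :=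
  tprod_one_sub_ne_zero (summable_norm_pow_odd hq) (fun i ↦ norm_pow_succ_lt_one hq (2 * i))

lemma hasProd_eulerPhi (hq : ‖q‖ < 1) : HasProd (fun n : ℕ ↦ 1 - q ^ (n + 1)) (eulerPhi q) :=
  (multipliable_one_sub (summable_norm_pow_succ hq)).hasProd

lemma hasProd_oddPhi (hq : ‖q‖ < 1) : HasProd (fun n : ℕ ↦ 1 - q ^ (2 * n + 1)) (oddPhi q) :=
  (multipliable_one_sub (summable_norm_pow_odd hq)).hasProd

lemma eulerPhi_eq_oddPhi_mul (hq : ‖q‖ < 1) : eulerPhi q = oddPhi q * eulerPhi (q ^ 2) := by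
  refine (hasProd_eulerPhi hq).unique (HasProd.even_mul_odd (hasProd_oddPhi hq) ?_)
  convert hasProd_eulerPhi (norm_pow_succ_lt_one hq 1) using 3 with n
  rw [← pow_mul]; ring

lemma coeff_genFun_podWeight (n : ℕ) :
    PowerSeries.coeff n (Nat.Partition.genFun podWeight) = podCount n := by
  classical
  have hweight (P : n.Partition) : P.parts.toFinsupp.prod podWeight =
      if ∀ i ∈ P.parts, Odd i → P.parts.count i ≤ 1 then 1 else 0 := calc
    _ = ∏ i ∈ P.parts.toFinset, if Odd i → P.parts.count i ≤ 1 then (1 : ℝ) else 0 := by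
        rw [Finsupp.prod, Multiset.toFinsupp_support]
        refine prod_congr rfl fun i _ ↦ ?_
        rw [Multiset.toFinsupp_apply, podWeight]
        grind
    _ = _ := by simp only [prod_boole, Multiset.mem_toFinset]
  simp_rw [Nat.Partition.coeff_genFun, hweight]
  rw [sum_boole, podCount, Nat.card_eq_fintype_card, Fintype.card_subtype]

lemma hasSum_podWeight {𝕜 : Type*} [RCLike 𝕜] (i : ℕ) {w : 𝕜} (hw : ‖w‖ < 1) :
    HasSum (fun j ↦ podWeight (i + 1) (j + 1) • w ^ (j + 1))
      (if Even i then w else w * (1 - w)⁻¹) := by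
  split_ifs with hi
  · have hodd : Odd (i + 1) := hi.add_one
    convert hasSum_single 0 fun j hj ↦ ?_ using 1
    · simp [podWeight]
    · simp [podWeight, hodd, Nat.one_le_iff_ne_zero, hj]
  · have hodd : ¬ Odd (i + 1) := by rw [Nat.odd_add_one]; simpa using hi
    simpa only [podWeight, hodd, false_and, if_false, one_smul, pow_succ'] using
      (hasSum_geometric_of_norm_lt_one hw).mul_left w

lemma hasProd_podGF_factors (hq : ‖q‖ < 1) :
    HasProd (fun i ↦ 1 + if Even i then q ^ (i + 1) else q ^ (i + 1) * (1 - q ^ (i + 1))⁻¹)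
      (oddPhi q * eulerPhi (q ^ 4))⁻¹ := by
  have hq2 := norm_pow_succ_lt_one hq 1
  have hvalue : (oddPhi q * eulerPhi (q ^ 4))⁻¹ =
      oddPhi (q ^ 2) / oddPhi q * (eulerPhi (q ^ 2))⁻¹ := by
    rw [eulerPhi_eq_oddPhi_mul hq2, ← pow_mul]
    field_simp [oddPhi_ne_zero hq2]
  rw [hvalue]
  refine HasProd.even_mul_odd ?_ ?_
  · refine ((hasProd_oddPhi hq2).div₀ (hasProd_oddPhi hq) (oddPhi_ne_zero hq)).congr_fun fun k ↦ ?_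
    have := one_sub_ne_zero_of_norm_lt_one (norm_pow_succ_lt_one hq (2 * k))
    rw [if_pos (even_two_mul k), eq_div_iff this]
    ring
  · refine ((hasProd_eulerPhi hq2).inv₀ (eulerPhi_ne_zero hq2)).congr_fun fun k ↦ ?_
    have := one_sub_ne_zero_of_norm_lt_one (norm_pow_succ_lt_one hq (2 * k + 1))
    have hpow : (q ^ 2) ^ (k + 1) = q ^ (2 * k + 1 + 1) := by rw [← pow_mul]; ring
    rw [if_neg (Nat.not_even_two_mul_add_one k), hpow, inv_eq_one_div, eq_div_iff this, add_mul,
      mul_assoc, one_div_mul_cancel this]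
    ring

theorem hasSum_podCount (hq : ‖q‖ < 1) :
    HasSum (fun n ↦ (podCount n : ℂ) * q ^ n) (oddPhi q * eulerPhi (q ^ 4))⁻¹ := by
  have hr : ‖‖q‖‖ < 1 := by rwa [norm_norm]
  have hsum : Summable fun i : ℕ ↦
      if Even i then ‖q‖ ^ (i + 1) else ‖q‖ ^ (i + 1) * (1 - ‖q‖ ^ (i + 1))⁻¹ := by
    have hpow_le (i : ℕ) : ‖q‖ ^ (i + 1) ≤ ‖q‖ :=
      pow_le_of_le_one (norm_nonneg q) hq.le i.succ_ne_zero
    have hone_le : 1 ≤ (1 - ‖q‖)⁻¹ := (one_le_inv₀ (by linarith)).mpr (by linarith [norm_nonneg q])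
    refine Summable.of_nonneg_of_le (fun i ↦ ?_) (fun i ↦ ?_)
      ((summable_norm_pow_succ hq).mul_right (1 - ‖q‖)⁻¹)
    · have : 0 ≤ 1 - ‖q‖ ^ (i + 1) := by linarith [hpow_le i]
      split_ifs <;> positivity
    · rw [norm_pow]
      split_ifs
      · exact le_mul_of_one_le_right (by positivity) hone_le
      · gcongr
        exact hpow_le i
  have heval := hasEvalAt_of_hasProd (Nat.Partition.hasProd_genFun podWeight)
    (fun i n ↦ ?_) (fun i ↦ ?_)
    (fun i ↦ hasEvalAt_genFun_factor podWeight i (hasSum_podWeight i (norm_pow_succ_lt_one hq i)))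
    hsum
    (fun i ↦ hasEvalAt_genFun_factor podWeight i (hasSum_podWeight i (norm_pow_succ_lt_one hr i)))
    (hasProd_podGF_factors hq)
  · simpa only [HasEvalAt, coeff_genFun_podWeight, Complex.real_smul, Complex.ofReal_natCast]
      using heval
  · rw [coeff_genFun_factor, podWeight]
    split_ifs <;> norm_num
  · rw [coeff_genFun_factor, if_pos rfl]

lemma podGF_eq (hq : ‖q‖ < 1) : podGF q = (oddPhi q * eulerPhi (q ^ 4))⁻¹ :=
  (hasSum_podCount hq).tsum_eq

lemma summable_podCount_mul_pow {r : ℝ} (hr0 : 0 ≤ r) (hr : r < 1) :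
    Summable fun n ↦ (podCount n : ℝ) * r ^ n := by
  have hq : ‖(r : ℂ)‖ < 1 := by rwa [Complex.norm_real, norm_of_nonneg hr0]
  exact_mod_cast (hasSum_podCount hq).summable

end PodGeneratingFunction

/-! ### Decay of the generating function away from the positive axis -/

section MinorArc

lemma norm_inv_one_sub_le {w : ℂ} (hw : ‖w‖ < 1) :
    ‖(1 - w)⁻¹‖ ≤ ‖(1 - (‖w‖ : ℂ))⁻¹‖ * rexp (-(‖w‖ - w.re)) := by
  have hw' : ‖(‖w‖ : ℂ)‖ < 1 := by simpa using hw
  have hlog := (Complex.hasSum_re (Complex.hasSum_taylorSeries_neg_log hw')).sub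
    (Complex.hasSum_re (Complex.hasSum_taylorSeries_neg_log hw))
  have hterm (n : ℕ) : 0 ≤ ((‖w‖ : ℂ) ^ n / n).re - (w ^ n / n).re := by
    have h := Complex.re_le_norm (w ^ n / n)
    rw [norm_div, norm_pow, Complex.norm_natCast] at h
    exact sub_nonneg.mpr (by exact_mod_cast h)
  have hfirst := le_hasSum hlog 1 fun n _ ↦ hterm n
  simp only [pow_one, Nat.cast_one, div_one, Complex.ofReal_re, Complex.neg_re,
    Complex.log_re] at hfirst
  have hpos := norm_pos_iff.mpr (one_sub_ne_zero_of_norm_lt_one hw)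
  have hpos' := norm_pos_iff.mpr (one_sub_ne_zero_of_norm_lt_one hw')
  rw [norm_inv, norm_inv, ← exp_log hpos, ← exp_log hpos', ← Real.exp_neg, ← Real.exp_neg,
    ← Real.exp_add, exp_le_exp]
  linarith

lemma norm_inv_tprod_one_sub_le {ι : Type*} {w : ι → ℂ} (hw : Summable fun i ↦ ‖w i‖)
    (hw1 : ∀ i, ‖w i‖ < 1) :
    ‖(∏' i, (1 - w i))⁻¹‖ ≤
      ‖(∏' i, (1 - (‖w i‖ : ℂ)))⁻¹‖ * rexp (-∑' i, (‖w i‖ - (w i).re)) := by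
  have hw' : Summable fun i ↦ ‖(‖w i‖ : ℂ)‖ := by simpa using hw
  have hw1' (i : ι) : ‖(‖w i‖ : ℂ)‖ < 1 := by simpa using hw1 i
  have hgap : Summable fun i ↦ ‖w i‖ - (w i).re :=
    hw.sub (Complex.hasSum_re hw.of_norm.hasSum).summable
  refine le_of_tendsto_of_tendsto'
    ((multipliable_one_sub hw).hasProd.inv₀ (tprod_one_sub_ne_zero hw hw1)).norm
    (((multipliable_one_sub hw').hasProd.inv₀ (tprod_one_sub_ne_zero hw' hw1')).norm.mul
      hgap.hasSum.neg.rexp) fun s ↦ ?_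
  simp only [Function.comp_apply]
  exact prod_le_prod (fun i _ ↦ norm_nonneg _) fun i _ ↦ norm_inv_one_sub_le (hw1 i)

lemma hasSum_pow_odd {q : ℂ} (hq : ‖q‖ < 1) :
    HasSum (fun i : ℕ ↦ q ^ (2 * i + 1)) (q / (1 - q ^ 2)) := by
  simpa only [← pow_mul, ← pow_succ', div_eq_mul_inv] using
    (hasSum_geometric_of_norm_lt_one (norm_pow_succ_lt_one hq 1)).mul_left q

lemma norm_podGF_le {q : ℂ} (hq : ‖q‖ < 1) :
    ‖podGF q‖ ≤ ‖podGF ‖q‖‖ * rexp (-((‖q‖ / (1 - ‖q‖ ^ 2) : ℂ).re - (q / (1 - q ^ 2)).re)) := by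
  have hr : ‖(‖q‖ : ℂ)‖ < 1 := by simpa using hq
  have hgap := ((Complex.hasSum_re (hasSum_pow_odd hr)).sub
    (Complex.hasSum_re (hasSum_pow_odd hq))).tsum_eq
  have hodd := norm_inv_tprod_one_sub_le (summable_norm_pow_odd hq)
    fun i ↦ norm_pow_succ_lt_one hq (2 * i)
  have heven := norm_inv_tprod_one_sub_le
    (summable_norm_pow_succ (norm_pow_succ_lt_one hq 3)) fun i ↦
      norm_pow_succ_lt_one (norm_pow_succ_lt_one hq 3) i
  have hexp : rexp (-∑' i : ℕ, (‖(q ^ 4) ^ (i + 1)‖ - ((q ^ 4) ^ (i + 1)).re)) ≤ 1 :=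
    Real.exp_le_one_iff.mpr <| neg_nonpos.mpr <|
      tsum_nonneg fun i ↦ sub_nonneg.mpr (Complex.re_le_norm _)
  simp only [norm_pow, Complex.ofReal_pow] at hodd heven hexp
  simp only [← Complex.ofReal_pow, Complex.ofReal_re] at hgap
  rw [Complex.ofReal_pow] at hgap
  rw [podGF_eq hq, podGF_eq hr, mul_inv, mul_inv, norm_mul, norm_mul, ← hgap, mul_right_comm]
  exact mul_le_mul hodd (heven.trans (mul_le_of_le_one_right (norm_nonneg _) hexp))
    (norm_nonneg _) (by positivity)

lemma exp_neg_div_one_sub_exp_neg_sq (z : ℂ) :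
    Complex.exp (-z) / (1 - Complex.exp (-z) ^ 2) = (2 * Complex.sinh z)⁻¹ := by
  have h : 1 - Complex.exp (-z) ^ 2 = Complex.exp (-z) * (2 * Complex.sinh z) := by
    rw [Complex.two_sinh, mul_sub, ← Complex.exp_add, neg_add_cancel, Complex.exp_zero, sq]
  rw [h, div_mul_cancel_left₀ (Complex.exp_ne_zero _)]

lemma inv_two_sinh_re (z : ℂ) : ((2 * Complex.sinh z)⁻¹).re =
    Real.sinh z.re * Real.cos z.im / (2 * (Real.sinh z.re ^ 2 + Real.sin z.im ^ 2)) := by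
  have hsinh : Complex.sinh z = (Real.sinh z.re * Real.cos z.im : ℝ) +
      (Real.cosh z.re * Real.sin z.im : ℝ) * Complex.I := by
    conv_lhs => rw [← Complex.re_add_im z, Complex.sinh_add, Complex.sinh_mul_I, Complex.cosh_mul_I]
    push_cast; ring
  have hnormSq : Complex.normSq (Complex.sinh z) = Real.sinh z.re ^ 2 + Real.sin z.im ^ 2 := by
    rw [hsinh, Complex.normSq_add_mul_I, mul_pow, mul_pow, Real.cosh_sq, Real.cos_sq']
    ring
  have hre : (Complex.sinh z).re = Real.sinh z.re * Real.cos z.im := by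
    rw [hsinh, Complex.add_re, Complex.re_ofReal_mul, Complex.I_re, mul_zero, add_zero,
      Complex.ofReal_re]
  rw [mul_inv, ← Complex.ofReal_ofNat, ← Complex.ofReal_inv, Complex.re_ofReal_mul,
    Complex.inv_re, hnormSq, hre, ← div_eq_inv_mul, div_div, mul_comm 2]

lemma norm_podGF_exp_neg_le {z : ℂ} (hz : 0 < z.re) :
    ‖podGF (Complex.exp (-z))‖ ≤ ‖podGF (Complex.exp (-z.re))‖ *
      rexp (-((2 * Real.sinh z.re)⁻¹ - ((2 * Complex.sinh z)⁻¹).re)) := by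
  have hq : ‖Complex.exp (-z)‖ = rexp (-z.re) := by rw [Complex.norm_exp, Complex.neg_re]
  have h := norm_podGF_le (q := Complex.exp (-z)) (by rw [hq]; simpa using hz)
  rwa [hq, Complex.ofReal_exp, Complex.ofReal_neg, exp_neg_div_one_sub_exp_neg_sq,
    exp_neg_div_one_sub_exp_neg_sq, ← Complex.ofReal_sinh, ← Complex.ofReal_ofNat,
    ← Complex.ofReal_mul, ← Complex.ofReal_inv, Complex.ofReal_re] at h

lemma sinh_le_two_mul {x : ℝ} (hx : 0 ≤ x) (hx1 : x ≤ 1) : Real.sinh x ≤ 2 * x := by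
  have h := abs_le.mp (Real.abs_exp_sub_one_sub_id_le (abs_le.mpr ⟨by linarith, hx1⟩))
  have h' := Real.add_one_le_exp (-x)
  rw [Real.sinh_eq]
  nlinarith

lemma abs_le_two_mul_abs_sin {y : ℝ} (hy : |y| ≤ π / 2) : |y| ≤ 2 * |Real.sin y| := by
  have h := Real.mul_abs_le_abs_sin hy
  have hpi : 1 / 2 ≤ 2 / π := by
    rw [div_le_div_iff₀ two_pos Real.pi_pos]
    linarith [Real.pi_le_four]
  nlinarith [abs_nonneg y]

lemma le_inv_two_sinh_sub_re {z : ℂ} (hx : 0 < z.re) (hx1 : z.re ≤ 1) (hxy : z.re ≤ |z.im|)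
    (hy : |z.im| ≤ π) :
    1 / (70 * z.re) ≤ (2 * Real.sinh z.re)⁻¹ - ((2 * Complex.sinh z)⁻¹).re := by
  rw [inv_two_sinh_re]
  have hs : 0 < Real.sinh z.re := Real.sinh_pos_iff.mpr hx
  have hsx := sinh_le_two_mul hx.le hx1
  set s := Real.sinh z.re
  set t := Real.sin z.im
  rcases le_total (Real.cos z.im) 0 with hcos | hcos
  · have hneg : s * Real.cos z.im / (2 * (s ^ 2 + t ^ 2)) ≤ 0 :=
      div_nonpos_of_nonpos_of_nonneg (mul_nonpos_of_nonneg_of_nonpos hs.le hcos) (by positivity)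
    have hinv : 1 / (70 * z.re) ≤ (2 * s)⁻¹ := by
      rw [one_div]; exact inv_anti₀ (by positivity) (by linarith)
    linarith
  · have hy2 : |z.im| ≤ π / 2 := by
      by_contra! hlt
      have := Real.cos_neg_of_pi_div_two_lt_of_lt hlt (by linarith [Real.pi_pos])
      rw [Real.cos_abs] at this
      exact this.not_ge hcos
    have hst : s ≤ 4 * |t| := by linarith [abs_le_two_mul_abs_sin hy2]
    have hst2 : s ^ 2 ≤ 16 * t ^ 2 := by rw [← sq_abs t]; nlinarith
    calc 1 / (70 * z.re) ≤ t ^ 2 / (2 * s * (s ^ 2 + t ^ 2)) := by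
          rw [div_le_div_iff₀ (by positivity) (by positivity)]
          nlinarith [mul_le_mul_of_nonneg_left hst2 hs.le,
            mul_le_mul_of_nonneg_right hsx (sq_nonneg t), mul_nonneg hx.le (sq_nonneg t)]
      _ = (2 * s)⁻¹ - s * 1 / (2 * (s ^ 2 + t ^ 2)) := by field_simp; ring
      _ ≤ (2 * s)⁻¹ - s * Real.cos z.im / (2 * (s ^ 2 + t ^ 2)) := by
          gcongr
          exact Real.cos_le_one _

theorem norm_podGF_exp_neg_le_of_le_abs_im {z : ℂ} (hx : 0 < z.re) (hx1 : z.re ≤ 1)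
    (hxy : z.re ≤ |z.im|) (hy : |z.im| ≤ π) :
    ‖podGF (Complex.exp (-z))‖ ≤
      ‖podGF (Complex.exp (-z.re))‖ * rexp (-(1 / (70 * z.re))) :=
  (norm_podGF_exp_neg_le hx).trans <| by
    gcongr
    exact le_inv_two_sinh_sub_re hx hx1 hxy hy

end MinorArc

/-! ### Modular transformation -/

section Modular

lemma csqrt_mul {v w : ℂ} (hv : v ≠ 0) (hw : w ≠ 0) (harg : v.arg + w.arg ∈ Set.Ioc (-π) π) :
    Complex.sqrt (v * w) = Complex.sqrt v * Complex.sqrt w := by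
  rw [sqrt_eq_exp (mul_ne_zero hv hw), sqrt_eq_exp hv, sqrt_eq_exp hw,
    Complex.log_mul hv hw harg, add_div, Complex.exp_add]

lemma csqrt_ofReal {c : ℝ} (hc : 0 ≤ c) : Complex.sqrt c = √c := by
  rw [Complex.sqrt_of_nonneg (by exact_mod_cast hc), Complex.ofReal_re]

lemma csqrt_ofReal_mul {c : ℝ} (hc : 0 < c) {v : ℂ} (hv : v ≠ 0) :
    Complex.sqrt (c * v) = √c * Complex.sqrt v := by
  rw [csqrt_mul (by exact_mod_cast hc.ne') hv, csqrt_ofReal hc.le]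
  simpa [Complex.arg_ofReal_of_nonneg hc.le] using
    (⟨Complex.neg_pi_lt_arg v, Complex.arg_le_pi v⟩ : -π < v.arg ∧ v.arg ≤ π)

lemma csqrt_I_mul {v : ℂ} (hv : 0 < v.re) :
    Complex.sqrt (Complex.I * v) = Complex.sqrt Complex.I * Complex.sqrt v := by
  have hv0 : v ≠ 0 := by rintro rfl; simp at hv
  have harg := abs_lt.mp (Complex.abs_arg_lt_pi_div_two_iff.mpr (Or.inl hv))
  refine csqrt_mul Complex.I_ne_zero hv0 ?_
  rw [Complex.arg_I]
  constructor <;> linarith [Real.pi_pos]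

lemma csqrt_ne_zero {v : ℂ} (hv : v ≠ 0) : Complex.sqrt v ≠ 0 := by
  rw [sqrt_eq_exp hv]; exact Complex.exp_ne_zero _

lemma norm_exp_neg_lt_one {z : ℂ} (hz : 0 < z.re) : ‖Complex.exp (-z)‖ < 1 := by
  rw [Complex.norm_exp, Real.exp_lt_one_iff]; simpa using hz

/-- Dedekind's eta function at `i w / 2π`, so that its inversion formula reads `w ↦ 4π² / w`. -/
noncomputable def etaExp (w : ℂ) : ℂ := Complex.exp (-w / 24) * eulerPhi (Complex.exp (-w))

lemma eta_I_mul (w : ℂ) : ModularForm.eta (Complex.I * (w / (2 * π))) = etaExp w := by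
  have hpi : (π : ℂ) ≠ 0 := by exact_mod_cast Real.pi_ne_zero
  have hparam : 2 * (π : ℂ) * Complex.I * (Complex.I * (w / (2 * π))) = -w := by
    field_simp
    rw [Complex.I_sq]; ring
  rw [ModularForm.eta, etaExp, eulerPhi, Function.Periodic.qParam, hparam]
  simp_rw [ModularForm.eta_q_eq_pow, hparam]
  norm_num

lemma etaExp_ne_zero {w : ℂ} (hw : 0 < w.re) : etaExp w ≠ 0 :=
  mul_ne_zero (Complex.exp_ne_zero _) (eulerPhi_ne_zero (norm_exp_neg_lt_one hw))

lemma div_ofReal_re_pos {w : ℂ} (hw : 0 < w.re) {c : ℝ} (hc : 0 < c) : 0 < (w / c).re := by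
  rw [Complex.div_ofReal_re]; positivity

lemma etaExp_inversion {w : ℂ} (hw : 0 < w.re) :
    etaExp (4 * π ^ 2 / w) = Complex.sqrt (w / (2 * π)) * etaExp w := by
  have hw0 : w ≠ 0 := by rintro rfl; simp at hw
  have hpi : (π : ℂ) ≠ 0 := by exact_mod_cast Real.pi_ne_zero
  have hre : 0 < (w / (2 * π)).re := by exact_mod_cast div_ofReal_re_pos hw Real.two_pi_pos
  have hmem : Complex.I * (w / (2 * π)) ∈ UpperHalfPlane.upperHalfPlaneSet := by
    change 0 < (Complex.I * (w / (2 * π))).im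
    rwa [Complex.I_mul_im]
  have hinv : -1 / (Complex.I * (w / (2 * π))) = Complex.I * ((4 * π ^ 2 / w) / (2 * π)) := by
    have hI := Complex.I_ne_zero
    field_simp
    rw [Complex.I_sq]; ring
  have h := ModularForm.eta_comp_eq_csqrt_I_inv hmem
  simp only [Function.comp, Pi.smul_apply, Pi.mul_apply, smul_eq_mul] at h
  rw [hinv, eta_I_mul, eta_I_mul, csqrt_I_mul hre, mul_assoc,
    inv_mul_cancel_left₀ (csqrt_ne_zero Complex.I_ne_zero)] at h
  exact h

lemma podGF_exp_neg_eq {z : ℂ} (hz : 0 < z.re) : podGF (Complex.exp (-z)) =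
    Complex.exp (-z / 8) * (etaExp (2 * z) / (etaExp z * etaExp (4 * z))) := by
  have hq := norm_exp_neg_lt_one hz
  have hpow (m : ℕ) : Complex.exp (-z) ^ m = Complex.exp (-(m * z)) := by
    rw [← Complex.exp_nat_mul, mul_neg]
  have h2 := eulerPhi_ne_zero (norm_pow_succ_lt_one hq 1)
  have h4 := eulerPhi_ne_zero (norm_pow_succ_lt_one hq 3)
  have hexp : Complex.exp (-z / 8) * Complex.exp (-(2 * z) / 24) =
      Complex.exp (-z / 24) * Complex.exp (-(4 * z) / 24) := by
    rw [← Complex.exp_add, ← Complex.exp_add]; ring_nf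
  have hphi := eulerPhi_eq_oddPhi_mul hq
  rw [podGF_eq hq]
  simp only [etaExp]
  norm_num only [hpow, Nat.cast_ofNat] at h2 h4 hphi ⊢
  rw [hphi, mul_div_assoc', ← mul_assoc, hexp, inv_eq_one_div, div_eq_div_iff]
  · ring
  all_goals simp [h2, h4, oddPhi_ne_zero hq, Complex.exp_ne_zero]

theorem podGF_exp_neg_inversion {z : ℂ} (hz : 0 < z.re) : podGF (Complex.exp (-z)) =
    Complex.sqrt (z / π) * Complex.exp (π ^ 2 / (8 * z) - z / 8) *
      podGF (Complex.exp (-(π ^ 2 / z))) := by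
  have hz0 : z ≠ 0 := by rintro rfl; simp at hz
  have hpi : (π : ℂ) ≠ 0 := by exact_mod_cast Real.pi_ne_zero
  have hzπ : z / π ≠ 0 := div_ne_zero hz0 hpi
  have hdual : 0 < (π ^ 2 / z).re := by
    rw [← Complex.ofReal_pow, div_eq_mul_inv, Complex.re_ofReal_mul, Complex.inv_re]
    have := Complex.normSq_pos.mpr hz0
    positivity
  have hE1 := etaExp_inversion (w := z) hz
  have hE2 := etaExp_inversion (w := 2 * z) (by simpa using hz)
  have hE4 := etaExp_inversion (w := 4 * z) (by simpa using hz)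
  have hz1 : z / (2 * π) = (1 / 2 : ℝ) * (z / π) := by push_cast; field_simp
  have hz2 : 2 * z / (2 * π) = z / π := by field_simp
  have hz4 : 4 * z / (2 * π) = (2 : ℝ) * (z / π) := by push_cast; field_simp; norm_num
  have hw2 : 4 * π ^ 2 / (2 * z) = 2 * (π ^ 2 / z) := by field_simp; norm_num
  have hw4 : 4 * π ^ 2 / (4 * z) = π ^ 2 / z := by field_simp
  rw [mul_div_assoc, hz1, csqrt_ofReal_mul (by norm_num) hzπ] at hE1
  rw [hz2, hw2] at hE2
  rw [hz4, hw4, csqrt_ofReal_mul (by norm_num) hzπ] at hE4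
  have hsqrt : (√(1 / 2) * √2 : ℂ) = 1 := by
    rw [← Complex.ofReal_mul, ← Real.sqrt_mul (by norm_num)]; norm_num
  have hexp : Complex.exp (-z / 8) =
      Complex.exp (π ^ 2 / (8 * z) - z / 8) * Complex.exp (-(π ^ 2 / z) / 8) := by
    rw [← Complex.exp_add]; congr 1; field_simp; ring
  rw [podGF_exp_neg_eq hz, podGF_exp_neg_eq hdual, hE1, hE2, hE4, hexp]
  have hs := csqrt_ne_zero hzπ
  have hs1 := left_ne_zero_of_mul_eq_one hsqrt
  have hs2 := right_ne_zero_of_mul_eq_one hsqrt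
  have h1 := etaExp_ne_zero hz
  have h4 := etaExp_ne_zero (w := 4 * z) (by simpa using hz)
  generalize etaExp z = e₁, etaExp (2 * z) = e₂, etaExp (4 * z) = e₄ at *
  field_simp
  linear_combination e₂ * hsqrt

end Modular

/-! ### The major arc -/

section MajorArc

lemma norm_tsum_mul_pow_sub_le {a : ℕ → ℂ} {r : ℝ} (hr : 0 < r)
    (ha : Summable fun n ↦ ‖a n‖ * r ^ n) {q : ℂ} (hq : ‖q‖ ≤ r) :
    ‖∑' n, a n * q ^ n - a 0‖ ≤ (∑' n, ‖a (n + 1)‖ * r ^ n) * ‖q‖ := by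
  have hsum : Summable fun n ↦ a n * q ^ n := by
    refine ha.of_norm_bounded fun n ↦ ?_
    rw [norm_mul, norm_pow]
    gcongr
  have htail : Summable fun n ↦ ‖a (n + 1)‖ * r ^ n := by
    refine (((summable_nat_add_iff 1).mpr ha).mul_right r⁻¹).congr fun n ↦ ?_
    rw [pow_succ, ← mul_assoc, mul_inv_cancel_right₀ hr.ne']
  rw [hsum.tsum_eq_zero_add, pow_zero, mul_one, add_sub_cancel_left]
  refine tsum_of_norm_bounded (htail.hasSum.mul_right ‖q‖) fun n ↦ ?_
  rw [norm_mul, norm_pow, pow_succ, ← mul_assoc]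
  gcongr

lemma podCount_zero : podCount 0 = 1 := by
  have : Unique {P : Nat.Partition 0 // ∀ i ∈ P.parts, Odd i → P.parts.count i ≤ 1} :=
    { default := ⟨default, by simp⟩, uniq := fun P ↦ Subtype.ext (Subsingleton.elim _ _) }
  exact Nat.card_unique

lemma exists_norm_podGF_sub_one_le :
    ∃ C, 0 ≤ C ∧ ∀ q : ℂ, ‖q‖ ≤ 1 / 2 → ‖podGF q - 1‖ ≤ C * ‖q‖ := by
  refine ⟨∑' n, ‖(podCount (n + 1) : ℂ)‖ * (1 / 2) ^ n, tsum_nonneg fun n ↦ by positivity,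
    fun q hq ↦ ?_⟩
  have hsum : Summable fun n ↦ ‖(podCount n : ℂ)‖ * (1 / 2 : ℝ) ^ n := by
    simpa only [Complex.norm_natCast] using
      summable_podCount_mul_pow one_half_pos.le one_half_lt_one
  simpa only [podGF, podCount_zero, Nat.cast_one] using
    norm_tsum_mul_pow_sub_le one_half_pos hsum hq

/-- The point `x (1 + i u)` on the line of integration. -/
noncomputable def linePoint (x u : ℝ) : ℂ := x * (1 + u * Complex.I)

variable {x u : ℝ}

lemma linePoint_re (x u : ℝ) : (linePoint x u).re = x := by simp [linePoint]

lemma one_add_mul_I_ne_zero (u : ℝ) : (1 + u * Complex.I : ℂ) ≠ 0 := fun h ↦ by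
  simpa using congrArg Complex.re h

lemma linePoint_ne_zero (hx : x ≠ 0) (u : ℝ) : linePoint x u ≠ 0 :=
  mul_ne_zero (by exact_mod_cast hx) (one_add_mul_I_ne_zero u)

lemma norm_linePoint_le (hx : 0 ≤ x) (hu : |u| ≤ 1) : ‖linePoint x u‖ ≤ 2 * x := by
  have h : ‖(1 + u * Complex.I : ℂ)‖ ≤ 1 + |u| := by simpa using norm_add_le 1 (u * Complex.I)
  rw [linePoint, norm_mul, Complex.norm_real, norm_of_nonneg hx, mul_comm]
  gcongr
  linarith

lemma inv_one_add_mul_I_re (u : ℝ) : (1 + u * Complex.I : ℂ)⁻¹.re = (1 + u ^ 2)⁻¹ := by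
  simp [Complex.inv_re, Complex.normSq_apply, sq]

lemma inv_linePoint_re (x u : ℝ) : (linePoint x u)⁻¹.re = (x * (1 + u ^ 2))⁻¹ := by
  rw [linePoint, mul_inv, ← Complex.ofReal_inv, Complex.re_ofReal_mul, inv_one_add_mul_I_re,
    mul_inv]

lemma norm_exp_neg_pi_sq_div_linePoint_le (hx : 0 < x) (hu : |u| ≤ 1) :
    ‖Complex.exp (-(π ^ 2 / linePoint x u))‖ ≤ x / 4 := by
  have hre : (-(π ^ 2 / linePoint x u) : ℂ).re = -(π ^ 2 * (x * (1 + u ^ 2))⁻¹) := by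
    rw [Complex.neg_re, ← Complex.ofReal_pow, div_eq_mul_inv, Complex.re_ofReal_mul,
      inv_linePoint_re]
  have hlower : 4 / x ≤ π ^ 2 * (x * (1 + u ^ 2))⁻¹ := by
    have hu2 : u ^ 2 ≤ 1 := (sq_le_one_iff_abs_le_one u).mpr hu
    have h9 : 9 ≤ π ^ 2 := by nlinarith [Real.pi_gt_three]
    rw [← div_eq_mul_inv, div_le_div_iff₀ hx (by positivity)]
    nlinarith
  rw [Complex.norm_exp, hre, Real.exp_neg, inv_le_comm₀ (Real.exp_pos _) (by positivity), inv_div]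
  linarith [Real.add_one_le_exp (4 / x), Real.exp_le_exp.mpr hlower]

lemma norm_csqrt_one_add_mul_I_sub_one_le (u : ℝ) :
    ‖Complex.sqrt (1 + u * Complex.I) - 1‖ ≤ |u| := by
  set s := Complex.sqrt (1 + u * Complex.I) with hs
  have hsq : s ^ 2 = 1 + u * Complex.I := by
    rw [hs, sqrt_eq_exp (one_add_mul_I_ne_zero u), ← Complex.exp_nat_mul, Nat.cast_ofNat,
      mul_div_cancel₀ _ two_ne_zero, Complex.exp_log (one_add_mul_I_ne_zero u)]
  have hre : 0 ≤ s.re := by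
    rw [hs, Complex.sqrt, Complex.cpow_inv_two_re]; exact Real.sqrt_nonneg _
  have hge : 1 ≤ ‖s + 1‖ := by
    refine le_trans ?_ (Complex.re_le_norm _)
    simpa using hre
  calc ‖s - 1‖ ≤ ‖s - 1‖ * ‖s + 1‖ := le_mul_of_one_le_right (norm_nonneg _) hge
    _ = ‖(u * Complex.I : ℂ)‖ := by
        rw [← norm_mul]; congr 1; linear_combination hsq
    _ = |u| := by simp

lemma csqrt_linePoint_div_pi (hx : 0 < x) (u : ℝ) : Complex.sqrt (linePoint x u / π) =
    √(x / π) * Complex.sqrt (1 + u * Complex.I) := by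
  rw [← csqrt_ofReal_mul (by positivity) (one_add_mul_I_ne_zero u), linePoint]
  congr 1; push_cast; ring

lemma norm_exp_neg_linePoint_div_eight_sub_one_le (hx : 0 ≤ x) (hx4 : x ≤ 1 / 4) (hu : |u| ≤ 1) :
    ‖Complex.exp (-linePoint x u / 8) - 1‖ ≤ x := by
  have h8 : ‖-linePoint x u / 8‖ ≤ x / 4 := by
    rw [norm_div, norm_neg, Complex.norm_ofNat]
    linarith [norm_linePoint_le hx hu]
  linarith [Complex.norm_exp_sub_one_le (by linarith : ‖-linePoint x u / 8‖ ≤ 1)]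

lemma norm_one_sub_exp_neg_linePoint_div_sub_one_le (hx : 0 < x) (hx4 : x ≤ 1 / 4)
    (hu : |u| ≤ 1) : ‖(1 - Complex.exp (-linePoint x u)) / x - 1‖ ≤ |u| + 4 * x := by
  have hx0 : (x : ℂ) ≠ 0 := by exact_mod_cast hx.ne'
  have hz : ‖-linePoint x u‖ ≤ 2 * x := by rw [norm_neg]; exact norm_linePoint_le hx.le hu
  have hquad : ‖(Complex.exp (-linePoint x u) - 1 - -linePoint x u) / (x : ℂ)‖ ≤ 4 * x := by
    rw [norm_div, Complex.norm_real, norm_of_nonneg hx.le, div_le_iff₀ hx]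
    calc _ ≤ ‖-linePoint x u‖ ^ 2 := Complex.norm_exp_sub_one_sub_id_le (by linarith)
      _ ≤ (2 * x) ^ 2 := by gcongr
      _ = 4 * x * x := by ring
  calc _ = ‖u * Complex.I - (Complex.exp (-linePoint x u) - 1 - -linePoint x u) / x‖ := by
        congr 1
        rw [linePoint]
        field_simp
        ring
    _ ≤ ‖(u * Complex.I : ℂ)‖ + _ := norm_sub_le _ _
    _ ≤ |u| + 4 * x := by
        gcongr
        simp

lemma norm_mul_sub_one_le {R : Type*} [NormedRing R] {a b : R} {A B d : ℝ} (hA : 0 ≤ A)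
    (hd2 : d ≤ 2) (ha : ‖a - 1‖ ≤ A * d) (hb : ‖b - 1‖ ≤ B * d) :
    ‖a * b - 1‖ ≤ (A + B + 2 * A * B) * d := by
  have : 0 ≤ B * d := (norm_nonneg _).trans hb
  calc ‖a * b - 1‖ = ‖(a - 1) + (b - 1) + (a - 1) * (b - 1)‖ := by congr 1; noncomm_ring
    _ ≤ ‖a - 1‖ + ‖b - 1‖ + ‖a - 1‖ * ‖b - 1‖ :=
        norm_add₃_le.trans (by gcongr; exact norm_mul_le _ _)
    _ ≤ A * d + B * d + (A * 2) * (B * d) := by gcongr; exact ha.trans (by gcongr)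
    _ = (A + B + 2 * A * B) * d := by ring

/-- The generating function `podGF (e⁻ᶻ) (1 - e⁻ᶻ)` of the first differences of `pod` at
`z = x (1 + i u)`, divided by its singular part `√(x / π) x exp (π² / (8 z))`. -/
noncomputable def majorArcFactor (x u : ℝ) : ℂ :=
  podGF (Complex.exp (-linePoint x u)) * (1 - Complex.exp (-linePoint x u)) /
    ((√(x / π) * x : ℝ) * Complex.exp (π ^ 2 / (8 * linePoint x u)))

lemma majorArcFactor_eq (hx : 0 < x) (u : ℝ) : majorArcFactor x u =
    Complex.sqrt (1 + u * Complex.I) * Complex.exp (-linePoint x u / 8) *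
      podGF (Complex.exp (-(π ^ 2 / linePoint x u))) *
      ((1 - Complex.exp (-linePoint x u)) / x) := by
  have hx0 : (x : ℂ) ≠ 0 := by exact_mod_cast hx.ne'
  have hs : (√(x / π) : ℂ) ≠ 0 := by
    exact_mod_cast (Real.sqrt_pos.mpr (div_pos hx Real.pi_pos)).ne'
  have hE := Complex.exp_ne_zero (π ^ 2 / (8 * linePoint x u))
  rw [majorArcFactor, podGF_exp_neg_inversion (by rwa [linePoint_re]), csqrt_linePoint_div_pi hx,
    sub_eq_add_neg (_ / _), Complex.exp_add, neg_div, Complex.ofReal_mul]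
  field_simp

theorem exists_norm_majorArcFactor_sub_one_le :
    ∃ C, 0 ≤ C ∧ ∀ x u : ℝ, 0 < x → x ≤ 1 / 4 → |u| ≤ 1 →
      ‖majorArcFactor x u - 1‖ ≤ C * (|u| + x) := by
  obtain ⟨C, hC, hpod⟩ := exists_norm_podGF_sub_one_le
  let C₃ := 1 + 1 + 2 * 1 * 1 + C + 2 * (1 + 1 + 2 * 1 * 1) * C
  have hC₃ : 0 ≤ C₃ := by positivity
  refine ⟨C₃ + 4 + 2 * C₃ * 4, by positivity, fun x u hx hx4 hu ↦ ?_⟩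
  have hu0 := abs_nonneg u
  have hd2 : |u| + x ≤ 2 := by linarith
  have hsqrt : ‖Complex.sqrt (1 + u * Complex.I) - 1‖ ≤ 1 * (|u| + x) := by
    linarith [norm_csqrt_one_add_mul_I_sub_one_le u]
  have hexp : ‖Complex.exp (-linePoint x u / 8) - 1‖ ≤ 1 * (|u| + x) := by
    linarith [norm_exp_neg_linePoint_div_eight_sub_one_le hx.le hx4 hu]
  have hdual : ‖podGF (Complex.exp (-(π ^ 2 / linePoint x u))) - 1‖ ≤ C * (|u| + x) := by
    have hq := norm_exp_neg_pi_sq_div_linePoint_le hx hu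
    exact (hpod _ (by linarith)).trans (by gcongr; linarith)
  have hdiff : ‖(1 - Complex.exp (-linePoint x u)) / x - 1‖ ≤ 4 * (|u| + x) := by
    linarith [norm_one_sub_exp_neg_linePoint_div_sub_one_le hx hx4 hu]
  rw [majorArcFactor_eq hx]
  exact norm_mul_sub_one_le hC₃ hd2
    (norm_mul_sub_one_le (by norm_num) hd2
      (norm_mul_sub_one_le zero_le_one hd2 hsqrt hexp) hdual) hdiff

end MajorArc

/-! ### Laplace's method -/

section Laplace

variable {l u : ℝ}

lemma abs_le_four_mul_exp_sq_div (s : ℝ) : |s| ≤ 4 * rexp (s ^ 2 / 16) := by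
  have := Real.add_one_le_exp (s ^ 2 / 16)
  rw [← sq_abs] at this ⊢
  nlinarith [sq_nonneg (|s| - 4)]

lemma abs_le_div_sqrt_mul_exp (hl : 0 < l) (u : ℝ) : |u| ≤ 4 / √l * rexp (l * u ^ 2 / 16) := by
  have h := abs_le_four_mul_exp_sq_div (√l * u)
  rw [abs_mul, abs_of_nonneg (Real.sqrt_nonneg _), mul_pow, Real.sq_sqrt hl.le] at h
  rw [div_mul_eq_mul_div, le_div_iff₀ (Real.sqrt_pos.mpr hl)]
  linarith

lemma sqrt_pi_div_quarter_le (hl : 0 < l) : √(π / (l / 4)) ≤ 4 / √l := by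
  rw [Real.sqrt_le_left (by positivity), div_pow, Real.sq_sqrt hl.le,
    div_le_div_iff₀ (by positivity) hl]
  nlinarith [Real.pi_lt_four]

lemma integral_exp_neg_mul_sq_le (hl : 0 < l) (a b : ℝ) (hab : a ≤ b) :
    ∫ u in a..b, rexp (-l * u ^ 2) ≤ √(π / l) := by
  rw [intervalIntegral.integral_of_le hab, ← integral_gaussian l]
  exact MeasureTheory.setIntegral_le_integral (integrable_exp_neg_mul_sq hl)
    (.of_forall fun u ↦ (Real.exp_pos _).le)

lemma exp_neg_mul_sq_le_of_one_le_abs (hl : 0 < l) (hu : 1 ≤ |u|) :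
    rexp (-l * u ^ 2) ≤ 4 / √l * rexp (-(l / 4) * u ^ 2) :=
  calc rexp (-l * u ^ 2) ≤ 4 / √l * rexp (l * u ^ 2 / 16) * rexp (-l * u ^ 2) :=
        le_mul_of_one_le_left (Real.exp_pos _).le (hu.trans (abs_le_div_sqrt_mul_exp hl u))
    _ = 4 / √l * rexp (l * u ^ 2 / 16 + -l * u ^ 2) := by rw [mul_assoc, ← Real.exp_add]
    _ ≤ 4 / √l * rexp (-(l / 4) * u ^ 2) := by
        gcongr
        nlinarith [mul_nonneg hl.le (sq_nonneg u)]

lemma abs_integral_exp_neg_mul_sq_sub_le (hl : 0 < l) :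
    |(∫ u in (-1)..1, rexp (-l * u ^ 2)) - √(π / l)| ≤ 16 / l := by
  have hint := integrable_exp_neg_mul_sq hl
  have hint4 := (integrable_exp_neg_mul_sq (b := l / 4) (by positivity)).const_mul (4 / √l)
  have hsplit := MeasureTheory.integral_add_compl (measurableSet_Ioc (a := (-1 : ℝ)) (b := 1)) hint
  rw [intervalIntegral.integral_of_le (by norm_num), ← integral_gaussian l, ← hsplit,
    sub_add_cancel_left, abs_neg,
    abs_of_nonneg (MeasureTheory.integral_nonneg fun u ↦ (Real.exp_pos _).le)]
  calc ∫ u in (Set.Ioc (-1) 1)ᶜ, rexp (-l * u ^ 2)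
      ≤ ∫ u in (Set.Ioc (-1) 1)ᶜ, 4 / √l * rexp (-(l / 4) * u ^ 2) := by
        refine MeasureTheory.setIntegral_mono_on hint.integrableOn hint4.integrableOn
          measurableSet_Ioc.compl fun u hu ↦ exp_neg_mul_sq_le_of_one_le_abs hl ?_
        by_contra! hlt
        exact hu ⟨(abs_lt.mp hlt).1, (abs_lt.mp hlt).2.le⟩
    _ ≤ 4 / √l * √(π / (l / 4)) := by
        rw [← integral_gaussian (l / 4), ← MeasureTheory.integral_const_mul]
        exact MeasureTheory.setIntegral_le_integral hint4 (.of_forall fun u ↦ by positivity)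
    _ ≤ 4 / √l * (4 / √l) := by gcongr; exact sqrt_pi_div_quarter_le hl
    _ = 16 / l := by rw [div_mul_div_comm, Real.mul_self_sqrt hl.le]; norm_num

lemma neg_mul_sq_div_one_add_mul_I_re (l u : ℝ) :
    (-(l * u ^ 2) / (1 + u * Complex.I) : ℂ).re = -(l * u ^ 2) / (1 + u ^ 2) := by
  rw [← Complex.ofReal_pow, ← Complex.ofReal_mul, ← Complex.ofReal_neg, div_eq_mul_inv,
    Complex.re_ofReal_mul, inv_one_add_mul_I_re, div_eq_mul_inv]

lemma neg_mul_sq_div_one_add_mul_I_re_le (hl : 0 ≤ l) (hu : |u| ≤ 1) :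
    (-(l * u ^ 2) / (1 + u * Complex.I) : ℂ).re ≤ -(l * u ^ 2) / 2 := by
  rw [neg_mul_sq_div_one_add_mul_I_re, neg_div, neg_div, neg_le_neg_iff]
  gcongr
  linarith [(sq_le_one_iff_abs_le_one u).mpr hu]

lemma norm_exp_div_one_add_mul_I_le (hl : 0 ≤ l) (hu : |u| ≤ 1) :
    ‖Complex.exp (-(l * u ^ 2) / (1 + u * Complex.I))‖ ≤ rexp (-(l * u ^ 2) / 2) := by
  rw [Complex.norm_exp]
  exact Real.exp_le_exp.mpr (neg_mul_sq_div_one_add_mul_I_re_le hl hu)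

lemma norm_exp_div_one_add_mul_I_sub_le (hl : 0 ≤ l) (hu : |u| ≤ 1) :
    ‖Complex.exp (-(l * u ^ 2) / (1 + u * Complex.I)) - rexp (-l * u ^ 2)‖ ≤
      rexp (-(l * u ^ 2) / 2) * (l * |u| ^ 3) := by
  have hlip := (convex_halfSpace_re_le (-(l * u ^ 2) / 2)).norm_image_sub_le_of_norm_deriv_le
    (f := Complex.exp) (C := rexp (-(l * u ^ 2) / 2)) (x := (-l * u ^ 2 : ℝ))
    (y := -(l * u ^ 2) / (1 + u * Complex.I)) (fun w _ ↦ Complex.differentiableAt_exp)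
    (fun w hw ↦ by rw [Complex.deriv_exp, Complex.norm_exp]; exact Real.exp_le_exp.mpr hw)
    (by
      simp only [Set.mem_ofPred_eq, Complex.ofReal_re]
      linarith [mul_nonneg hl (sq_nonneg u)])
    (neg_mul_sq_div_one_add_mul_I_re_le hl hu)
  have hdiff : -(l * u ^ 2) / (1 + u * Complex.I) - (-l * u ^ 2 : ℝ) =
      (l * u ^ 2 * u : ℝ) * Complex.I / (1 + u * Complex.I) := by
    have := one_add_mul_I_ne_zero u
    push_cast; field_simp; ring
  have hden : 1 ≤ ‖(1 + u * Complex.I : ℂ)‖ := by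
    refine le_trans ?_ (Complex.re_le_norm _); simp
  rw [Complex.ofReal_exp]
  refine hlip.trans ?_
  gcongr
  calc _ ≤ ‖((l * u ^ 2 * u : ℝ) * Complex.I : ℂ)‖ := by
        rw [hdiff, norm_div]
        exact div_le_self (norm_nonneg _) hden
    _ = l * |u| ^ 3 := by
        rw [norm_mul, Complex.norm_real, Complex.norm_I, mul_one, Real.norm_eq_abs, abs_mul,
          abs_of_nonneg (by positivity), ← sq_abs]
        ring

lemma mul_abs_add_inv_sqrt_mul_exp_le (hl : 0 < l) {K : ℝ} (hK : 0 ≤ K) (u : ℝ) :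
    (l * |u| ^ 3 + K * (|u| + 1 / √l)) * rexp (-(l * u ^ 2) / 2) ≤
      (64 + 5 * K) / √l * rexp (-(l / 4) * u ^ 2) := by
  have := Real.sqrt_pos.mpr hl
  set E := rexp (l * u ^ 2 / 16) with hE
  have hE1 : 1 ≤ E := Real.one_le_exp (by positivity)
  have hu := abs_le_div_sqrt_mul_exp hl u
  have hcube : l * |u| ^ 3 ≤ 64 / √l * E ^ 3 := calc
    l * |u| ^ 3 ≤ √l ^ 2 * (4 / √l * E) ^ 3 := by
      rw [Real.sq_sqrt hl.le]; gcongr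
    _ = 64 / √l * E ^ 3 := by field_simp; norm_num
  have hlin : |u| + 1 / √l ≤ 5 / √l * E ^ 3 := calc
    |u| + 1 / √l ≤ 4 / √l * E ^ 3 + 1 / √l * E ^ 3 := by
      gcongr
      · exact hu.trans (by gcongr; exact le_self_pow₀ hE1 three_ne_zero)
      · exact le_mul_of_one_le_right (by positivity) (one_le_pow₀ hE1)
    _ = 5 / √l * E ^ 3 := by ring
  calc _ ≤ (64 / √l * E ^ 3 + K * (5 / √l * E ^ 3)) * rexp (-(l * u ^ 2) / 2) := by gcongr
    _ = (64 + 5 * K) / √l * (E ^ 3 * rexp (-(l * u ^ 2) / 2)) := by ring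
    _ ≤ (64 + 5 * K) / √l * rexp (-(l / 4) * u ^ 2) := by
        rw [hE, ← Real.exp_nat_mul, ← Real.exp_add]
        gcongr
        push_cast
        nlinarith [mul_nonneg hl.le (sq_nonneg u)]

lemma norm_mul_exp_sub_exp_le (hl : 0 < l) (hu : |u| ≤ 1) {w : ℂ} {K : ℝ} (hK : 0 ≤ K)
    (hw : ‖w - 1‖ ≤ K * (|u| + 1 / √l)) :
    ‖w * Complex.exp (-(l * u ^ 2) / (1 + u * Complex.I)) - rexp (-l * u ^ 2)‖ ≤
      (64 + 5 * K) / √l * rexp (-(l / 4) * u ^ 2) := by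
  refine le_trans ?_ (mul_abs_add_inv_sqrt_mul_exp_le hl hK u)
  have hQ := norm_exp_div_one_add_mul_I_le hl.le hu
  have hQ' := norm_exp_div_one_add_mul_I_sub_le hl.le hu
  set Q := Complex.exp (-(l * u ^ 2) / (1 + u * Complex.I))
  calc ‖w * Q - rexp (-l * u ^ 2)‖ = ‖(Q - rexp (-l * u ^ 2)) + (w - 1) * Q‖ := by
        congr 1; ring
    _ ≤ ‖Q - rexp (-l * u ^ 2)‖ + ‖w - 1‖ * ‖Q‖ := (norm_add_le _ _).trans_eq (by rw [norm_mul])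
    _ ≤ rexp (-(l * u ^ 2) / 2) * (l * |u| ^ 3) +
        K * (|u| + 1 / √l) * rexp (-(l * u ^ 2) / 2) := by gcongr
    _ = (l * |u| ^ 3 + K * (|u| + 1 / √l)) * rexp (-(l * u ^ 2) / 2) := by ring

theorem norm_integral_mul_exp_sub_sqrt_le (hl : 0 < l) {f : ℝ → ℂ} {K : ℝ}
    (hf : IntervalIntegrable f MeasureTheory.volume (-1) 1)
    (hfK : ∀ u, |u| ≤ 1 → ‖f u - 1‖ ≤ K * (|u| + 1 / √l)) :
    ‖(∫ u in (-1 : ℝ)..1, f u * Complex.exp (-(l * u ^ 2) / (1 + u * Complex.I))) - √(π / l)‖ ≤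
      (272 + 20 * K) / l := by
  have hK : 0 ≤ K := by
    have h0 := (norm_nonneg _).trans (hfK 0 (by simp))
    rw [abs_zero, zero_add] at h0
    exact nonneg_of_mul_nonneg_left h0 (by positivity)
  have hcont : Continuous fun u : ℝ ↦ Complex.exp (-(l * u ^ 2) / (1 + u * Complex.I)) := by
    have := one_add_mul_I_ne_zero
    fun_prop (disch := assumption)
  have hgauss : Continuous fun u : ℝ ↦ (rexp (-l * u ^ 2) : ℂ) := by fun_prop
  have hint : ‖(∫ u in (-1 : ℝ)..1, f u * Complex.exp (-(l * u ^ 2) / (1 + u * Complex.I))) -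
      (∫ u in (-1 : ℝ)..1, rexp (-l * u ^ 2) : ℝ)‖ ≤ (256 + 20 * K) / l := by
    rw [← intervalIntegral.integral_ofReal, ← intervalIntegral.integral_sub
      (hf.mul_continuousOn hcont.continuousOn) (hgauss.intervalIntegrable _ _)]
    calc _ ≤ ∫ u in (-1 : ℝ)..1, (64 + 5 * K) / √l * rexp (-(l / 4) * u ^ 2) :=
          intervalIntegral.norm_integral_le_of_norm_le (by norm_num)
            (.of_forall fun u hu ↦ have hu1 := abs_le.mpr ⟨hu.1.le, hu.2⟩
              norm_mul_exp_sub_exp_le hl hu1 hK (hfK u hu1))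
            (by apply Continuous.intervalIntegrable; fun_prop)
      _ ≤ (64 + 5 * K) / √l * (4 / √l) := by
          rw [intervalIntegral.integral_const_mul]
          gcongr
          exact (integral_exp_neg_mul_sq_le (by positivity) _ _ (by norm_num)).trans
            (sqrt_pi_div_quarter_le hl)
      _ = (256 + 20 * K) / l := by rw [div_mul_div_comm, Real.mul_self_sqrt hl.le]; ring
  have hmain := abs_integral_exp_neg_mul_sq_sub_le hl
  rw [← Real.norm_eq_abs, ← Complex.norm_real, Complex.ofReal_sub] at hmain
  calc _ ≤ (256 + 20 * K) / l + 16 / l :=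
        (norm_sub_le_norm_sub_add_norm_sub _ _ _).trans (add_le_add hint hmain)
    _ = (272 + 20 * K) / l := by ring

end Laplace

/-! ### The circle method -/

section CircleMethod

lemma integral_exp_int_mul_I (k : ℤ) :
    ∫ y in -π..π, Complex.exp (k * Complex.I * y) = if k = 0 then 2 * (π : ℂ) else 0 := by
  split_ifs with hk
  · simp [hk, two_mul]
  · have hperiod : Complex.exp (k * Complex.I * π) = Complex.exp (k * Complex.I * (-π : ℝ)) :=
      Complex.exp_eq_exp_iff_exists_int.mpr ⟨k, by push_cast; ring⟩
    rw [integral_exp_mul_complex (mul_ne_zero (by exact_mod_cast hk) Complex.I_ne_zero), hperiod,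
      sub_self, zero_div]

section PowerSeries

variable {a : ℕ → ℂ} {x : ℝ}

lemma norm_exp_neg_add_mul_I (x y : ℝ) : ‖Complex.exp (-(x + y * Complex.I))‖ = rexp (-x) := by
  simp [Complex.norm_exp]

lemma continuous_tsum_mul_exp_pow (ha : Summable fun m ↦ ‖a m‖ * rexp (-x) ^ m) :
    Continuous fun y : ℝ ↦ ∑' m, a m * Complex.exp (-(x + y * Complex.I)) ^ m :=
  continuous_tsum (fun m ↦ by fun_prop) ha fun m y ↦ by
    rw [norm_mul, norm_pow, norm_exp_neg_add_mul_I]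

lemma integral_exp_mul_exp_pow (n m : ℕ) (c : ℂ) :
    ∫ y in -π..π, Complex.exp (n * (x + y * Complex.I)) *
      (c * Complex.exp (-(x + y * Complex.I)) ^ m) = if m = n then 2 * π * c else 0 := by
  have hexp (y : ℝ) : Complex.exp (n * (x + y * Complex.I)) *
      (c * Complex.exp (-(x + y * Complex.I)) ^ m) =
        c * Complex.exp ((n - m) * x) * Complex.exp ((n - m : ℤ) * Complex.I * y) := by
    rw [← Complex.exp_nat_mul, mul_left_comm, ← Complex.exp_add, mul_assoc, ← Complex.exp_add]
    congr 2
    push_cast; ring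
  simp_rw [hexp]
  rw [intervalIntegral.integral_const_mul, integral_exp_int_mul_I]
  by_cases hmn : m = n
  · subst hmn; simp [mul_comm]
  · have : (n - m : ℤ) ≠ 0 := by omega
    simp [hmn, this]

theorem integral_exp_mul_tsum (ha : Summable fun m ↦ ‖a m‖ * rexp (-x) ^ m) (n : ℕ) :
    ∫ y in -π..π, Complex.exp (n * (x + y * Complex.I)) *
      ∑' m, a m * Complex.exp (-(x + y * Complex.I)) ^ m = 2 * π * a n := by
  have hnorm (m : ℕ) (y : ℝ) :
      ‖a m * Complex.exp (-(x + y * Complex.I)) ^ m‖ = ‖a m‖ * rexp (-x) ^ m := by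
    rw [norm_mul, norm_pow, norm_exp_neg_add_mul_I]
  have h := intervalIntegral.hasSum_integral_of_dominated_convergence (a := -π) (b := π)
    (μ := MeasureTheory.volume)
    (F := fun m y ↦ Complex.exp (n * (x + y * Complex.I)) *
      (a m * Complex.exp (-(x + y * Complex.I)) ^ m))
    (f := fun y ↦ Complex.exp (n * (x + y * Complex.I)) *
      ∑' m, a m * Complex.exp (-(x + y * Complex.I)) ^ m)
    (fun m _ ↦ rexp (n * x) * (‖a m‖ * rexp (-x) ^ m))
    (fun m ↦ Continuous.aestronglyMeasurable (by fun_prop))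
    (fun m ↦ .of_forall fun y _ ↦ by
      rw [norm_mul, hnorm, Complex.norm_exp]
      simp)
    (.of_forall fun y _ ↦ ha.mul_left _)
    (by simp)
    (.of_forall fun y _ ↦ HasSum.mul_left _
      (Summable.of_norm (ha.congr fun m ↦ (hnorm m y).symm)).hasSum)
  simp_rw [integral_exp_mul_exp_pow] at h
  rw [← h.tsum_eq, tsum_ite_eq]

end PowerSeries

/-- The integrand of Cauchy's formula for the coefficient of `qⁿ` in `podGF q * (1 - q)`, in the
variable `z` with `q = e⁻ᶻ`. -/
noncomputable def diffIntegrand (n : ℕ) (z : ℂ) : ℂ :=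
  Complex.exp (n * z) * (podGF (Complex.exp (-z)) * (1 - Complex.exp (-z)))

variable {x : ℝ} {n : ℕ}

lemma summable_norm_podCount_mul_exp (hx : 0 < x) :
    Summable fun m ↦ ‖(podCount m : ℂ)‖ * rexp (-x) ^ m := by
  simpa only [Complex.norm_natCast] using
    summable_podCount_mul_pow (Real.exp_pos _).le (Real.exp_lt_one_iff.mpr (neg_lt_zero.mpr hx))

lemma continuous_podGF_exp (hx : 0 < x) :
    Continuous fun y : ℝ ↦ podGF (Complex.exp (-(x + y * Complex.I))) :=
  continuous_tsum_mul_exp_pow (summable_norm_podCount_mul_exp hx)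

lemma continuous_diffIntegrand (hx : 0 < x) (n : ℕ) :
    Continuous fun y : ℝ ↦ diffIntegrand n (x + y * Complex.I) := by
  have := continuous_podGF_exp hx
  unfold diffIntegrand
  fun_prop

lemma integral_diffIntegrand (hx : 0 < x) (hn : 1 ≤ n) :
    ∫ y in -π..π, diffIntegrand n (x + y * Complex.I) =
      2 * π * ((podCount n : ℂ) - podCount (n - 1)) := by
  have hcont := continuous_podGF_exp hx
  have hcauchy := integral_exp_mul_tsum (summable_norm_podCount_mul_exp hx)
  rw [mul_sub, ← hcauchy n, ← hcauchy (n - 1), ← intervalIntegral.integral_sub]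
  · refine intervalIntegral.integral_congr fun y _ ↦ ?_
    have hexp (z : ℂ) :
        Complex.exp ((n - 1 : ℕ) * z) = Complex.exp (n * z) * Complex.exp (-z) := by
      rw [← Complex.exp_add]; congr 1; push_cast [hn]; ring
    simp only [diffIntegrand, hexp, podGF]
    ring
  all_goals
    simp only [podGF] at hcont
    exact Continuous.intervalIntegrable (by fun_prop) _ _

lemma linePoint_eq (x u : ℝ) : linePoint x u = x + (x * u : ℝ) * Complex.I := by
  rw [linePoint]; push_cast; ring

lemma continuous_majorArcFactor (hx : 0 < x) : Continuous (majorArcFactor x) := by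
  have hpod : Continuous fun u ↦ podGF (Complex.exp (-linePoint x u)) := by
    simp only [linePoint_eq]
    exact (continuous_podGF_exp hx).comp (continuous_const_mul x)
  have hline : Continuous (linePoint x) := by unfold linePoint; fun_prop
  have hne := linePoint_ne_zero hx.ne'
  have hsqrt := (Real.sqrt_pos.mpr (div_pos hx Real.pi_pos)).ne'
  unfold majorArcFactor
  fun_prop (disch := simp [hne, hsqrt, hx.ne', Complex.exp_ne_zero])

lemma exp_mul_exp_linePoint (hx : 0 < x) (hn : n * (8 * x ^ 2) = π ^ 2) (u : ℝ) :
    Complex.exp (n * linePoint x u) * Complex.exp (π ^ 2 / (8 * linePoint x u)) =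
      rexp (π ^ 2 / (4 * x)) *
        Complex.exp (-((π ^ 2 / (8 * x) : ℝ) * u ^ 2) / (1 + u * Complex.I)) := by
  have hx0 : (x : ℂ) ≠ 0 := by exact_mod_cast hx.ne'
  have hv := one_add_mul_I_ne_zero u
  have hnC : (n : ℂ) = π ^ 2 / (8 * x ^ 2) := by
    rw [eq_div_iff (by simpa using hx.ne')]; exact_mod_cast hn
  rw [Complex.ofReal_exp, ← Complex.exp_add, ← Complex.exp_add, hnC, linePoint]
  congr 1
  push_cast
  field_simp
  ring_nf
  rw [Complex.I_sq]; ring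

lemma diffIntegrand_linePoint (hx : 0 < x) (hn : n * (8 * x ^ 2) = π ^ 2) (u : ℝ) :
    diffIntegrand n (linePoint x u) = (√(x / π) * x * rexp (π ^ 2 / (4 * x)) : ℝ) *
      (majorArcFactor x u *
        Complex.exp (-((π ^ 2 / (8 * x) : ℝ) * u ^ 2) / (1 + u * Complex.I))) := by
  have hA : ((√(x / π) * x : ℝ) : ℂ) ≠ 0 := by
    have := Real.sqrt_pos.mpr (div_pos hx Real.pi_pos)
    exact_mod_cast (by positivity : √(x / π) * x ≠ 0)
  have hE := Complex.exp_ne_zero (π ^ 2 / (8 * linePoint x u))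
  have hfactor : podGF (Complex.exp (-linePoint x u)) * (1 - Complex.exp (-linePoint x u)) =
      (√(x / π) * x : ℝ) * Complex.exp (π ^ 2 / (8 * linePoint x u)) * majorArcFactor x u := by
    rw [majorArcFactor, mul_div_cancel₀ _ (mul_ne_zero hA hE)]
  rw [diffIntegrand, hfactor, Complex.ofReal_mul _ (rexp _)]
  linear_combination ((√(x / π) * x : ℝ) : ℂ) * majorArcFactor x u * exp_mul_exp_linePoint hx hn u

lemma integral_diffIntegrand_major (hx : 0 < x) (hn : n * (8 * x ^ 2) = π ^ 2) :
    ∫ y in -x..x, diffIntegrand n (x + y * Complex.I) =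
      (x * (√(x / π) * x * rexp (π ^ 2 / (4 * x))) : ℝ) * ∫ u in (-1 : ℝ)..1, majorArcFactor x u *
        Complex.exp (-((π ^ 2 / (8 * x) : ℝ) * u ^ 2) / (1 + u * Complex.I)) := by
  have hsub := intervalIntegral.smul_integral_comp_mul_left (a := -1) (b := 1)
    (fun y : ℝ ↦ diffIntegrand n (x + y * Complex.I)) x
  rw [mul_neg_one, mul_one] at hsub
  simp only [← linePoint_eq, diffIntegrand_linePoint hx hn,
    intervalIntegral.integral_const_mul] at hsub
  rw [← hsub, Complex.real_smul, Complex.ofReal_mul x (_ * _), mul_assoc (x : ℂ)]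

lemma sqrt_div_pi_mul_sqrt (hx : 0 < x) :
    √(x / π) * √(π / (π ^ 2 / (8 * x))) = 2 * √2 / π * x := by
  have h : x / π * (π / (π ^ 2 / (8 * x))) = (2 * x / π) ^ 2 * 2 := by field_simp; norm_num
  rw [← Real.sqrt_mul (by positivity), h, Real.sqrt_mul (by positivity),
    Real.sqrt_sq (by positivity)]
  ring

lemma le_inv_sqrt_pi_sq_div (hx : 0 < x) (hx4 : x ≤ 1 / 4) : x ≤ 1 / √(π ^ 2 / (8 * x)) := by
  have hpi : π ^ 2 ≤ 16 := by nlinarith [Real.pi_pos, Real.pi_lt_four]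
  rw [le_div_iff₀ (by positivity), ← le_div_iff₀' hx, Real.sqrt_le_left (by positivity), div_pow,
    div_le_div_iff₀ (by positivity) (by positivity)]
  nlinarith [mul_le_mul_of_nonneg_right hpi hx.le]

theorem exists_norm_integral_major_sub_le :
    ∃ C, 0 ≤ C ∧ ∀ (x : ℝ) (n : ℕ), 0 < x → x ≤ 1 / 4 → n * (8 * x ^ 2) = π ^ 2 →
      ‖(∫ y in -x..x, diffIntegrand n (x + y * Complex.I)) -
        (2 * √2 / π * x ^ 3 * rexp (π ^ 2 / (4 * x)) : ℝ)‖ ≤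
          C * (x ^ 3 * √x) * rexp (π ^ 2 / (4 * x)) := by
  obtain ⟨K, hK, hfactor⟩ := exists_norm_majorArcFactor_sub_one_le
  refine ⟨272 + 20 * K, by positivity, fun x n hx hx4 hn ↦ ?_⟩
  have hlaplace := norm_integral_mul_exp_sub_sqrt_le (l := π ^ 2 / (8 * x)) (by positivity)
    ((continuous_majorArcFactor hx).intervalIntegrable _ _) fun u hu ↦
      (hfactor x u hx hx4 hu).trans (by gcongr; exact le_inv_sqrt_pi_sq_div hx hx4)
  have hmain : 2 * √2 / π * x ^ 3 * rexp (π ^ 2 / (4 * x)) =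
      x * (√(x / π) * x * rexp (π ^ 2 / (4 * x))) * √(π / (π ^ 2 / (8 * x))) := by
    linear_combination -(x ^ 2 * rexp (π ^ 2 / (4 * x))) * sqrt_div_pi_mul_sqrt hx
  have hsqrt : √(x / π) ≤ √x :=
    Real.sqrt_le_sqrt (div_le_self hx.le (by linarith [Real.pi_gt_three]))
  have hl : (π ^ 2 / (8 * x))⁻¹ ≤ x := by
    have hpi : 8 ≤ π ^ 2 := by nlinarith [Real.pi_gt_three]
    rw [inv_div, div_le_iff₀ (by positivity), mul_comm]
    gcongr
  rw [integral_diffIntegrand_major hx hn, hmain, Complex.ofReal_mul _ √_, ← mul_sub, norm_mul,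
    Complex.norm_real, norm_of_nonneg (by positivity)]
  calc _ ≤ x * (√x * x * rexp (π ^ 2 / (4 * x))) * ((272 + 20 * K) * x) := by
        gcongr
        exact hlaplace.trans (by rw [div_eq_mul_inv]; gcongr)
    _ = _ := by ring

lemma exists_norm_podGF_exp_neg_ofReal_le :
    ∃ C, 0 ≤ C ∧ ∀ x : ℝ, 0 < x → x ≤ 1 →
      ‖podGF (Complex.exp (-x))‖ ≤ C * √x * rexp (π ^ 2 / (8 * x)) := by
  obtain ⟨C, hC, hpod⟩ := exists_norm_podGF_sub_one_le
  refine ⟨1 + C, by positivity, fun x hx hx1 ↦ ?_⟩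
  have hline : linePoint x 0 = x := by simp [linePoint]
  have hdual : ‖podGF (Complex.exp (-(π ^ 2 / x)))‖ ≤ 1 + C := by
    have hq := norm_exp_neg_pi_sq_div_linePoint_le hx (u := 0) (by simp)
    rw [hline] at hq
    refine (norm_le_norm_add_norm_sub' _ 1).trans ?_
    rw [norm_one]
    gcongr
    exact (hpod _ (by linarith)).trans (mul_le_of_le_one_right hC (by linarith))
  have hsqrt : ‖Complex.sqrt (x / π)‖ ≤ √x := by
    rw [← Complex.ofReal_div, csqrt_ofReal (by positivity), Complex.norm_real,
      norm_of_nonneg (Real.sqrt_nonneg _)]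
    exact Real.sqrt_le_sqrt (div_le_self hx.le (by linarith [Real.pi_gt_three]))
  have hexp : ‖Complex.exp (π ^ 2 / (8 * x) - x / 8)‖ ≤ rexp (π ^ 2 / (8 * x)) := by
    rw [Complex.norm_exp, Real.exp_le_exp]
    norm_cast
    linarith
  rw [podGF_exp_neg_inversion (by simpa using hx), norm_mul, norm_mul]
  calc _ ≤ √x * rexp (π ^ 2 / (8 * x)) * (1 + C) := by gcongr
    _ = _ := by ring

lemma exp_neg_inv_le_mul_cube (hx : 0 < x) : rexp (-(1 / (70 * x))) ≤ 2058000 * x ^ 3 := by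
  have h := Real.pow_div_factorial_le_exp (1 / (70 * x)) (by positivity) 3
  rw [Real.exp_neg, inv_le_comm₀ (Real.exp_pos _) (by positivity)]
  refine le_trans (le_of_eq ?_) h
  norm_num [Nat.factorial]
  field_simp
  norm_num

theorem exists_norm_diffIntegrand_minor_le :
    ∃ C, 0 ≤ C ∧ ∀ (x : ℝ) (n : ℕ), 0 < x → x ≤ 1 → n * (8 * x ^ 2) = π ^ 2 →
      ∀ y : ℝ, x ≤ |y| → |y| ≤ π →
        ‖diffIntegrand n (x + y * Complex.I)‖ ≤ C * (x ^ 3 * √x) * rexp (π ^ 2 / (4 * x)) := by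
  obtain ⟨C, hC, hreal⟩ := exists_norm_podGF_exp_neg_ofReal_le
  refine ⟨2 * 2058000 * C, by positivity, fun x n hx hx1 hn y hxy hy ↦ ?_⟩
  have hminor := norm_podGF_exp_neg_le_of_le_abs_im (z := x + y * Complex.I) (by simpa using hx)
    (by simpa using hx1) (by simpa using hxy) (by simpa using hy)
  have hre : (x + y * Complex.I : ℂ).re = x := by simp
  rw [hre] at hminor
  have hdiff : ‖1 - Complex.exp (-(x + y * Complex.I))‖ ≤ 2 := by
    have h := norm_exp_neg_lt_one (z := x + y * Complex.I) (by simpa using hx)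
    linarith [norm_sub_le 1 (Complex.exp (-(x + y * Complex.I))), norm_one (α := ℂ)]
  have hnx : ‖Complex.exp (n * (x + y * Complex.I))‖ = rexp (π ^ 2 / (8 * x)) := by
    have hn' : (n : ℝ) * x = π ^ 2 / (8 * x) := by
      rw [eq_div_iff (by positivity), ← hn]; ring
    rw [Complex.norm_exp, ← Complex.ofReal_natCast, Complex.re_ofReal_mul, hre, hn']
  have hdouble : rexp (π ^ 2 / (4 * x)) = rexp (π ^ 2 / (8 * x)) * rexp (π ^ 2 / (8 * x)) := by
    rw [← Real.exp_add]; congr 1; field_simp; norm_num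
  rw [diffIntegrand, norm_mul, norm_mul, hnx, hdouble]
  calc _ ≤ rexp (π ^ 2 / (8 * x)) *
        (C * √x * rexp (π ^ 2 / (8 * x)) * (2058000 * x ^ 3) * 2) := by
        gcongr
        refine hminor.trans ?_
        gcongr
        · exact hreal x hx hx1
        · exact exp_neg_inv_le_mul_cube hx
    _ = _ := by ring

theorem exists_norm_integral_minor_le :
    ∃ C, 0 ≤ C ∧ ∀ (x : ℝ) (n : ℕ), 0 < x → x ≤ 1 → n * (8 * x ^ 2) = π ^ 2 →
      ‖(∫ y in -π..-x, diffIntegrand n (x + y * Complex.I)) +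
        ∫ y in x..π, diffIntegrand n (x + y * Complex.I)‖ ≤
          C * (x ^ 3 * √x) * rexp (π ^ 2 / (4 * x)) := by
  obtain ⟨C, hC, hminor⟩ := exists_norm_diffIntegrand_minor_le
  refine ⟨8 * C, by positivity, fun x n hx hx1 hn ↦ ?_⟩
  have hxπ : x ≤ π := by linarith [Real.pi_gt_three]
  have hB := hminor x n hx hx1 hn
  set B := C * (x ^ 3 * √x) * rexp (π ^ 2 / (4 * x)) with hB_def
  have hB0 : 0 ≤ B := by positivity
  have hneg : ‖∫ y in -π..-x, diffIntegrand n (x + y * Complex.I)‖ ≤ B * |-x - -π| :=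
    intervalIntegral.norm_integral_le_of_norm_le_const fun y hy ↦ by
      rw [Set.uIoc_of_le (by linarith)] at hy
      have hy0 : |y| = -y := abs_of_nonpos (by linarith [hy.2])
      exact hB y (by linarith [hy.2]) (by linarith [hy.1])
  have hpos : ‖∫ y in x..π, diffIntegrand n (x + y * Complex.I)‖ ≤ B * |π - x| :=
    intervalIntegral.norm_integral_le_of_norm_le_const fun y hy ↦ by
      rw [Set.uIoc_of_le hxπ] at hy
      have hy0 : |y| = y := abs_of_nonneg (by linarith [hy.1])
      exact hB y (by linarith [hy.1]) (by linarith [hy.2])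
  rw [abs_of_nonneg (by linarith)] at hneg hpos
  calc _ ≤ B * (-x - -π) + B * (π - x) := norm_add_le_of_le hneg hpos
    _ ≤ 8 * B := by nlinarith [Real.pi_le_four]
    _ = _ := by rw [hB_def]; ring

theorem exists_abs_podCount_sub_sub_le :
    ∃ C, 0 ≤ C ∧ ∀ (x : ℝ) (n : ℕ), 0 < x → x ≤ 1 / 4 → 1 ≤ n → n * (8 * x ^ 2) = π ^ 2 →
      |(podCount n : ℝ) - podCount (n - 1) - √2 / π ^ 2 * x ^ 3 * rexp (π ^ 2 / (4 * x))| ≤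
        C * (x ^ 3 * √x) * rexp (π ^ 2 / (4 * x)) := by
  obtain ⟨C₁, hC₁, hmajor⟩ := exists_norm_integral_major_sub_le
  obtain ⟨C₂, hC₂, hminor⟩ := exists_norm_integral_minor_le
  refine ⟨C₁ + C₂, by positivity, fun x n hx hx4 hn1 hn ↦ ?_⟩
  have hint (a b : ℝ) : IntervalIntegrable (fun y : ℝ ↦ diffIntegrand n (x + y * Complex.I))
      MeasureTheory.volume a b := (continuous_diffIntegrand hx n).intervalIntegrable a b
  have hcauchy := integral_diffIntegrand hx hn1
  rw [← intervalIntegral.integral_add_adjacent_intervals (hint (-π) (-x)) (hint (-x) π),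
    ← intervalIntegral.integral_add_adjacent_intervals (hint (-x) x) (hint x π)] at hcauchy
  have hmaj := hmajor x n hx hx4 hn
  have hmin := hminor x n hx (by linarith) hn
  set M := 2 * √2 / π * x ^ 3 * rexp (π ^ 2 / (4 * x)) with hM
  set D := (podCount n : ℝ) - podCount (n - 1) with hD
  have hbound : |2 * π * D - M| ≤ (C₁ + C₂) * (x ^ 3 * √x) * rexp (π ^ 2 / (4 * x)) := by
    have hsplit : ((2 * π * D - M : ℝ) : ℂ) =
        ((∫ y in -x..x, diffIntegrand n (x + y * Complex.I)) - (M : ℂ)) +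
          ((∫ y in -π..-x, diffIntegrand n (x + y * Complex.I)) +
            ∫ y in x..π, diffIntegrand n (x + y * Complex.I)) := by
      rw [hD]; push_cast; rw [← hcauchy]; ring
    rw [← Real.norm_eq_abs, ← Complex.norm_real, hsplit]
    exact (norm_add_le_of_le hmaj hmin).trans_eq (by ring)
  have hscale : 2 * π * D - M = 2 * π * (D - √2 / π ^ 2 * x ^ 3 * rexp (π ^ 2 / (4 * x))) := by
    rw [hM]; field_simp
  rw [hscale, abs_mul, abs_of_pos Real.two_pi_pos] at hbound
  exact (le_mul_of_one_le_left (abs_nonneg _) (by linarith [Real.pi_gt_three])).trans hbound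

end CircleMethod

/-! ### First differences of `pod` -/

section FirstDifference

/-- The function `tᵖ exp (π √(t / 2))`; for suitable exponents `p` it gives both the main terms and
the error terms of the asymptotics of `pod` and of its differences. -/
noncomputable def rpowMulExp (p t : ℝ) : ℝ := t ^ p * rexp (π * √t / √2)

variable {p n t : ℝ}

lemma rpowMulExp_nonneg (p : ℝ) (ht : 0 ≤ t) : 0 ≤ rpowMulExp p t := by
  unfold rpowMulExp; positivity

lemma rpowMulExp_le_of_exponent_le {q : ℝ} (ht : 1 ≤ t) (hpq : p ≤ q) :
    rpowMulExp p t ≤ rpowMulExp q t := by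
  unfold rpowMulExp; gcongr

lemma rpowMulExp_le_of_half_le (hp : p ≤ 0) (hn : 0 < n) (hnt : n / 2 ≤ t) (htn : t ≤ n) :
    rpowMulExp p t ≤ 2 ^ (-p) * rpowMulExp p n := by
  have hpow : t ^ p ≤ 2 ^ (-p) * n ^ p :=
    (Real.rpow_le_rpow_of_nonpos (by positivity) hnt hp).trans_eq <| by
      rw [Real.div_rpow hn.le zero_le_two, Real.rpow_neg zero_le_two, div_eq_inv_mul]
  rw [rpowMulExp, rpowMulExp, ← mul_assoc]
  gcongr

lemma hasDerivAt_rpowMulExp (p : ℝ) (ht : 0 < t) : HasDerivAt (rpowMulExp p)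
    (p * rpowMulExp (p - 1) t + π / (2 * √2) * rpowMulExp (p - 1 / 2) t) t := by
  have hexp := (((Real.hasDerivAt_sqrt ht.ne').const_mul π).div_const √2).exp
  have hsqrt : t ^ (p - 1 / 2) = t ^ p / √t := by rw [Real.rpow_sub ht, ← Real.sqrt_eq_rpow]
  refine ((Real.hasDerivAt_rpow_const (p := p) (Or.inl ht.ne')).mul hexp).congr_deriv ?_
  rw [rpowMulExp, rpowMulExp, hsqrt]
  ring

lemma norm_deriv_rpowMulExp_le (p : ℝ) (ht : 1 ≤ t) :
    ‖deriv (rpowMulExp p) t‖ ≤ (|p| + 2) * rpowMulExp (p - 1 / 2) t := by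
  have ht0 : 0 < t := by linarith
  have hexp := rpowMulExp_le_of_exponent_le ht (by linarith : p - 1 ≤ p - 1 / 2)
  have hpi : π / (2 * √2) ≤ 2 := by
    have hsqrt : 1 ≤ √2 := Real.one_le_sqrt.mpr one_le_two
    rw [div_le_iff₀ (by positivity)]
    linarith [Real.pi_le_four]
  have h1 := rpowMulExp_nonneg (p - 1) ht0.le
  have h2 := rpowMulExp_nonneg (p - 1 / 2) ht0.le
  rw [(hasDerivAt_rpowMulExp p ht0).deriv, add_mul]
  refine norm_add_le_of_le ?_ ?_
  · rw [norm_mul, Real.norm_eq_abs, norm_of_nonneg h1]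
    gcongr
  · rw [norm_of_nonneg (by positivity)]
    gcongr

lemma abs_rpowMulExp_sub_le {s : ℝ} (hp : p ≤ 0) (hn : 2 ≤ n) (hs : 0 ≤ s) (hsn : s ≤ n / 2) :
    |rpowMulExp p (n - s) - rpowMulExp p n| ≤
      (|p| + 2) * 2 ^ (-(p - 1 / 2)) * s * rpowMulExp (p - 1 / 2) n := by
  have hmean := (convex_Icc (n / 2) n).norm_image_sub_le_of_norm_deriv_le (f := rpowMulExp p)
    (C := (|p| + 2) * (2 ^ (-(p - 1 / 2)) * rpowMulExp (p - 1 / 2) n)) (x := n) (y := n - s)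
    (fun t ht ↦ (hasDerivAt_rpowMulExp p (by linarith [ht.1])).differentiableAt)
    (fun t ht ↦ (norm_deriv_rpowMulExp_le p (by linarith [ht.1])).trans <| by
      gcongr
      exact rpowMulExp_le_of_half_le (by linarith) (by linarith) ht.1 ht.2)
    ⟨by linarith, le_rfl⟩ ⟨by linarith, by linarith⟩
  rw [Real.norm_eq_abs, sub_sub_cancel_left, norm_neg, norm_of_nonneg hs] at hmean
  exact hmean.trans_eq (by ring)

lemma pow_mul_sqrt_eq_rpow (ht : 0 < t) : t ^ 3 * √t = t ^ ((7 : ℝ) / 2) := by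
  rw [Real.sqrt_eq_rpow, ← Real.rpow_natCast, ← Real.rpow_add ht]
  norm_num

lemma sqrt_eight : √8 = 2 * √2 := by
  rw [show (8 : ℝ) = 2 ^ 2 * 2 by norm_num, Real.sqrt_mul (by norm_num), Real.sqrt_sq zero_le_two]

/-- The saddle point of `exp (t z + π² / (8 z))`, at which `diffIntegrand` is concentrated. -/
noncomputable def saddlePoint (t : ℝ) : ℝ := π / √8 * t ^ (-(1 : ℝ) / 2)

lemma saddlePoint_pos (ht : 0 < t) : 0 < saddlePoint t := by unfold saddlePoint; positivity

lemma saddlePoint_eq (ht : 0 ≤ t) : saddlePoint t = π / (√8 * √t) := by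
  rw [saddlePoint, neg_div, Real.rpow_neg ht, ← Real.sqrt_eq_rpow, ← div_eq_mul_inv, div_div]

lemma mul_saddlePoint_sq (ht : 0 < t) : t * (8 * saddlePoint t ^ 2) = π ^ 2 := by
  rw [saddlePoint_eq ht.le, div_pow, mul_pow, Real.sq_sqrt (by norm_num), Real.sq_sqrt ht.le]
  field_simp

lemma saddlePoint_le (ht : 32 ≤ t) : saddlePoint t ≤ 1 / 4 := by
  have hsq := mul_saddlePoint_sq (by linarith : 0 < t)
  refine (abs_le_of_sq_le_sq' ?_ (by norm_num)).2
  nlinarith [Real.pi_pos, Real.pi_le_four, sq_nonneg (saddlePoint t)]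

lemma saddlePoint_pow_three (ht : 0 ≤ t) :
    √2 / π ^ 2 * saddlePoint t ^ 3 = π / 16 * t ^ (-(3 : ℝ) / 2) := by
  have hpow : (t ^ (-(1 : ℝ) / 2)) ^ 3 = t ^ (-(3 : ℝ) / 2) := by
    rw [← Real.rpow_mul_natCast ht]; norm_num
  rw [saddlePoint, mul_pow, hpow, sqrt_eight]
  field_simp
  rw [Real.sq_sqrt zero_le_two]
  ring

lemma saddlePoint_pow_three_mul_sqrt (ht : 0 < t) : saddlePoint t ^ 3 * √(saddlePoint t) =
    (π / √8) ^ ((7 : ℝ) / 2) * t ^ (-(7 : ℝ) / 4) := by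
  rw [pow_mul_sqrt_eq_rpow (saddlePoint_pos ht), saddlePoint,
    Real.mul_rpow (by positivity) (by positivity), ← Real.rpow_mul ht.le]
  norm_num

lemma pi_sq_div_saddlePoint (ht : 0 < t) : π ^ 2 / (4 * saddlePoint t) = π * √t / √2 := by
  rw [saddlePoint_eq ht.le, sqrt_eight]
  field_simp
  rw [Real.sq_sqrt zero_le_two]
  norm_num

theorem exists_abs_podCount_sub_podCount_pred_le :
    ∃ C, 0 ≤ C ∧ ∀ n : ℕ, 32 ≤ n →
      |(podCount n : ℝ) - podCount (n - 1) - π / 16 * rpowMulExp (-(3 : ℝ) / 2) n| ≤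
        C * rpowMulExp (-(7 : ℝ) / 4) n := by
  obtain ⟨C, hC, hdiff⟩ := exists_abs_podCount_sub_sub_le
  refine ⟨C * (π / √8) ^ ((7 : ℝ) / 2), by positivity, fun n hn ↦ ?_⟩
  have hn32 : (32 : ℝ) ≤ n := by exact_mod_cast hn
  have hn0 : (0 : ℝ) < n := by linarith
  have h := hdiff (saddlePoint n) n (saddlePoint_pos hn0) (saddlePoint_le hn32) (by omega)
    (mul_saddlePoint_sq hn0)
  rw [saddlePoint_pow_three hn0.le, saddlePoint_pow_three_mul_sqrt hn0,
    pi_sq_div_saddlePoint hn0] at h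
  simpa only [rpowMulExp, mul_assoc] using h

theorem exists_abs_podCount_shift_sub_pred_le :
    ∃ C, 0 ≤ C ∧ ∀ n s : ℕ, 64 ≤ n → 2 * s ≤ n →
      |(podCount (n - s) : ℝ) - podCount (n - (s + 1)) - π / 16 * rpowMulExp (-(3 : ℝ) / 2) n| ≤
        C * (rpowMulExp (-(7 : ℝ) / 4) n + s * rpowMulExp (-2) n) := by
  obtain ⟨C, hC, hdiff⟩ := exists_abs_podCount_sub_podCount_pred_le
  refine ⟨C * 2 ^ ((7 : ℝ) / 4) + 14, by positivity, fun n s hn hs ↦ ?_⟩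
  have hn64 : (64 : ℝ) ≤ n := by exact_mod_cast hn
  have hsn : (s : ℝ) ≤ n / 2 := by
    have : (2 : ℝ) * s ≤ n := by exact_mod_cast hs
    linarith
  have hcast : ((n - s : ℕ) : ℝ) = n - s := Nat.cast_sub (by omega)
  have hd := hdiff (n - s) (by omega)
  have herror := rpowMulExp_le_of_half_le (p := -(7 : ℝ) / 4) (n := n) (t := n - s) (by norm_num)
    (by linarith) (by linarith) (by linarith [Nat.cast_nonneg (α := ℝ) s])
  have hmain := abs_rpowMulExp_sub_le (p := -(3 : ℝ) / 2) (n := n) (s := s) (by norm_num)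
    (by linarith) (by positivity) hsn
  have hE := rpowMulExp_nonneg (-(7 : ℝ) / 4) (Nat.cast_nonneg (α := ℝ) n)
  have hP := rpowMulExp_nonneg (-2) (Nat.cast_nonneg (α := ℝ) n)
  have hconst : (|-(3 : ℝ) / 2| + 2) * 2 ^ (-(-(3 : ℝ) / 2 - 1 / 2)) = 14 := by norm_num [abs_div]
  rw [hcast] at hd
  rw [hconst, show -(3 : ℝ) / 2 - 1 / 2 = -2 by norm_num] at hmain
  rw [show -(-(7 : ℝ) / 4) = 7 / 4 by norm_num] at herror
  have hpi : π / 16 ≤ 1 := by linarith [Real.pi_le_four]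
  calc _ = |((podCount (n - s) : ℝ) - podCount (n - s - 1) -
          π / 16 * rpowMulExp (-(3 : ℝ) / 2) (n - s)) +
        π / 16 * (rpowMulExp (-(3 : ℝ) / 2) (n - s) - rpowMulExp (-(3 : ℝ) / 2) n)| := by
        rw [Nat.sub_sub]; congr 1; ring
    _ ≤ C * rpowMulExp (-(7 : ℝ) / 4) (n - s) + 1 * (14 * s * rpowMulExp (-2) n) := by
        refine (abs_add_le _ _).trans (add_le_add hd ?_)
        rw [abs_mul, abs_of_pos (by positivity)]
        gcongr
    _ ≤ C * (2 ^ ((7 : ℝ) / 4) * rpowMulExp (-(7 : ℝ) / 4) n) + 14 * (s * rpowMulExp (-2) n) := by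
        rw [one_mul, mul_assoc 14]
        gcongr
    _ ≤ _ := by
        have : 0 ≤ C * 2 ^ ((7 : ℝ) / 4) * (s * rpowMulExp (-2) n) := by positivity
        linarith

theorem exists_abs_podCount_shift_sub_shift_le :
    ∃ C, 0 ≤ C ∧ ∀ n s t : ℕ, 64 ≤ n → s ≤ t → 2 * t ≤ n →
      |(podCount (n - s) : ℝ) - podCount (n - t) -
          (t - s) * (π / 16 * rpowMulExp (-(3 : ℝ) / 2) n)| ≤
        C * (t - s) * (rpowMulExp (-(7 : ℝ) / 4) n + t * rpowMulExp (-2) n) := by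
  obtain ⟨C, hC, hstep⟩ := exists_abs_podCount_shift_sub_pred_le
  refine ⟨C, hC, fun n s t hn hst ↦ ?_⟩
  have hP := rpowMulExp_nonneg (-2) (Nat.cast_nonneg (α := ℝ) n)
  induction t, hst using Nat.le_induction with
  | base => simp
  | succ t hst ih =>
    intro ht
    have hst' : (s : ℝ) ≤ t := by exact_mod_cast hst
    have h0 := ih (by omega)
    have h1 := hstep n t hn (by omega)
    set F := π / 16 * rpowMulExp (-(3 : ℝ) / 2) n
    set E := rpowMulExp (-(7 : ℝ) / 4) n
    set P := rpowMulExp (-2) (n : ℝ)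
    calc _ = |((podCount (n - s) : ℝ) - podCount (n - t) - (t - s) * F) +
          ((podCount (n - t) : ℝ) - podCount (n - (t + 1)) - F)| := by
          push_cast; congr 1; ring
      _ ≤ C * (t - s) * (E + t * P) + C * (E + t * P) := (abs_add_le _ _).trans (add_le_add h0 h1)
      _ = C * (t + 1 - s) * (E + t * P) := by ring
      _ ≤ _ := by
          push_cast
          have : 0 ≤ C * (t + 1 - s) := mul_nonneg hC (by linarith)
          gcongr
          linarith

end FirstDifference

/-! ### The truncated sums -/

section TruncatedSum

lemma neg_one_pow_mul_sum_range_odd (k : ℕ) :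
    (-1 : ℝ) ^ (k - 1) * ∑ j ∈ range k, (-1 : ℝ) ^ j * (2 * j + 1) = k := by
  have hsum (k : ℕ) :
      ∑ j ∈ range (k + 1), (-1 : ℝ) ^ j * (2 * j + 1) = (-1) ^ k * (k + 1) := by
    induction k with
    | zero => simp
    | succ k ih => rw [sum_range_succ, ih]; push_cast; ring
  cases k with
  | zero => simp
  | succ k =>
    rw [hsum, Nat.add_sub_cancel, ← mul_assoc, ← mul_pow]
    norm_num

lemma sum_range_odd (k : ℕ) : ∑ j ∈ range k, (2 * (j : ℝ) + 1) = k ^ 2 := by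
  induction k with
  | zero => simp
  | succ k ih => rw [sum_range_succ, ih]; push_cast; ring

lemma podZ_natCast_sub {n s : ℕ} (hs : s ≤ n) : podZ (n - s) = podCount (n - s) := by
  rw [← Nat.cast_sub hs, podZ, if_pos (Int.natCast_nonneg _), Int.toNat_natCast]

lemma abs_MP_sub_le {k : ℕ} {n : ℤ} {F B : ℝ}
    (h : ∀ j < k, |(podZ (n - (j : ℤ) * (2 * j + 1)) : ℝ) -
      podZ (n - ((j : ℤ) + 1) * (2 * j + 1)) - (2 * j + 1) * F| ≤ (2 * j + 1) * B) :
    |(MP k n : ℝ) - k * F| ≤ k ^ 2 * B := by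
  have hsub : (MP k n : ℝ) - k * F = (-1) ^ (k - 1) * ∑ j ∈ range k, (-1 : ℝ) ^ j *
      ((podZ (n - (j : ℤ) * (2 * j + 1)) : ℝ) - podZ (n - ((j : ℤ) + 1) * (2 * j + 1)) -
        (2 * j + 1) * F) := by
    rw [← neg_one_pow_mul_sum_range_odd k, MP, mul_assoc, sum_mul]
    push_cast
    rw [← mul_sub, ← sum_sub_distrib]
    simp only [mul_sub, mul_assoc]
  rw [hsub, abs_mul, abs_neg_one_pow, one_mul, ← sum_range_odd, sum_mul]
  refine (abs_sum_le_sum_abs _ _).trans (sum_le_sum fun j hj ↦ ?_)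
  rw [abs_mul, abs_neg_one_pow, one_mul]
  exact h j (mem_range.mp hj)

theorem exists_abs_podZ_sub_podZ_le :
    ∃ C, 0 ≤ C ∧ ∀ n j : ℕ, 64 ≤ n → 2 * ((j + 1) * (2 * j + 1)) ≤ n →
      |(podZ (n - (j : ℤ) * (2 * j + 1)) : ℝ) - podZ (n - ((j : ℤ) + 1) * (2 * j + 1)) -
          (2 * j + 1) * (π / 16 * rpowMulExp (-(3 : ℝ) / 2) n)| ≤
        (2 * j + 1) * (C * (rpowMulExp (-(7 : ℝ) / 4) n +
          (j + 1) * (2 * j + 1) * rpowMulExp (-2) n)) := by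
  obtain ⟨C, hC, hshift⟩ := exists_abs_podCount_shift_sub_shift_le
  refine ⟨C, hC, fun n j hn hjn ↦ ?_⟩
  have hle : j * (2 * j + 1) ≤ (j + 1) * (2 * j + 1) := by gcongr; omega
  have hupper := podZ_natCast_sub (by omega : j * (2 * j + 1) ≤ n)
  have hlower := podZ_natCast_sub (by omega : (j + 1) * (2 * j + 1) ≤ n)
  have hlen : ((j + 1) * (2 * j + 1) - j * (2 * j + 1) : ℝ) = 2 * j + 1 := by ring
  have h := hshift n (j * (2 * j + 1)) ((j + 1) * (2 * j + 1)) hn hle hjn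
  push_cast at hupper hlower h
  rw [hlen, mul_comm C, mul_assoc] at h
  rw [hupper, hlower]
  exact_mod_cast h

theorem exists_abs_MP_sub_le : ∃ C : ℝ, 0 < C ∧ ∀ n k : ℕ, 64 ≤ n → 4 * k ^ 2 ≤ n →
    |(MP k n : ℝ) -
        π / 16 * k * (n : ℝ) ^ (-(3 : ℝ) / 2) * Real.exp (π * Real.sqrt n / Real.sqrt 2)| ≤
      C * k ^ 2 * ((n : ℝ) ^ (-(7 : ℝ) / 4) + k ^ 2 * (n : ℝ) ^ (-2 : ℝ)) *
        Real.exp (π * Real.sqrt n / Real.sqrt 2) := by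
  obtain ⟨C, hC, hblock⟩ := exists_abs_podZ_sub_podZ_le
  refine ⟨2 * C + 1, by positivity, fun n k hn hk ↦ ?_⟩
  have hE := rpowMulExp_nonneg (-(7 : ℝ) / 4) (Nat.cast_nonneg (α := ℝ) n)
  have hP := rpowMulExp_nonneg (-2) (Nat.cast_nonneg (α := ℝ) n)
  have h := abs_MP_sub_le (k := k) (n := n) (F := π / 16 * rpowMulExp (-(3 : ℝ) / 2) n)
    (B := (2 * C + 1) * (rpowMulExp (-(7 : ℝ) / 4) n + k ^ 2 * rpowMulExp (-2) n)) fun j hj ↦ by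
      have hjk : (j + 1) * (2 * j + 1) ≤ 2 * k ^ 2 := by nlinarith
      have hjkR : ((j + 1) * (2 * j + 1) : ℝ) ≤ 2 * k ^ 2 := by exact_mod_cast hjk
      refine (hblock n j hn (by omega)).trans (mul_le_mul_of_nonneg_left ?_ (by positivity))
      calc _ ≤ C * (rpowMulExp (-(7 : ℝ) / 4) n + 2 * k ^ 2 * rpowMulExp (-2) n) := by gcongr
        _ ≤ C * (2 * (rpowMulExp (-(7 : ℝ) / 4) n + k ^ 2 * rpowMulExp (-2) n)) := by
          gcongr; linarith
        _ = 2 * C * (rpowMulExp (-(7 : ℝ) / 4) n + k ^ 2 * rpowMulExp (-2) n) := by ring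
        _ ≤ _ := by gcongr; linarith
  simp only [rpowMulExp] at h
  refine (le_of_eq ?_).trans (h.trans_eq (by ring))
  congr 1; ring

lemma four_mul_sq_le {x y : ℝ} (hy : 16 ≤ y) (hx : 0 ≤ x) (hxy : x ≤ y ^ ((1 : ℝ) / 4)) :
    4 * x ^ 2 ≤ y := by
  have hsqrt : x ^ 2 ≤ √y := by
    calc x ^ 2 ≤ (y ^ ((1 : ℝ) / 4)) ^ 2 := by gcongr
      _ = √y := by rw [Real.sqrt_eq_rpow, ← Real.rpow_mul_natCast (by positivity)]; norm_num
  have hfour : 4 ≤ √y := Real.le_sqrt_of_sq_le (by linarith)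
  nlinarith [Real.sq_sqrt (by linarith : 0 ≤ y)]

lemma sq_mul_add_le_pow_three_mul {x y : ℝ} (hx : 1 ≤ x) (hy : 0 < y)
    (hxy : x ≤ y ^ ((1 : ℝ) / 4)) :
    x ^ 2 * (y ^ (-(7 : ℝ) / 4) + x ^ 2 * y ^ (-2 : ℝ)) ≤ 2 * x ^ 3 * y ^ (-(7 : ℝ) / 4) := by
  have hsplit : y ^ (-(7 : ℝ) / 4) = y ^ ((1 : ℝ) / 4) * y ^ (-2 : ℝ) := by
    rw [← Real.rpow_add hy]; norm_num
  calc _ = x ^ 2 * y ^ (-(7 : ℝ) / 4) + x ^ 3 * (x * y ^ (-2 : ℝ)) := by ring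
    _ ≤ x ^ 3 * y ^ (-(7 : ℝ) / 4) + x ^ 3 * (y ^ ((1 : ℝ) / 4) * y ^ (-2 : ℝ)) := by
        gcongr
        norm_num
    _ = _ := by rw [← hsplit]; ring

theorem MP_asymptotic_general : ∃ C : ℝ, 0 < C ∧ ∀ n : ℕ, 64 ≤ n → ∀ k : ℕ, 0 < k →
    (k : ℝ) ≤ (n : ℝ) ^ ((1 : ℝ) / 4) →
    |(MP k n : ℝ) -
        π / 16 * k * (n : ℝ) ^ (-(3 : ℝ) / 2) * Real.exp (π * Real.sqrt n / Real.sqrt 2)| ≤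
      C * k ^ 3 * (n : ℝ) ^ (-(7 : ℝ) / 4) * Real.exp (π * Real.sqrt n / Real.sqrt 2) := by
  obtain ⟨C, hC, hMP⟩ := exists_abs_MP_sub_le
  refine ⟨2 * C, by positivity, fun n hn k hk hkn ↦ ?_⟩
  have hn64 : (64 : ℝ) ≤ n := by exact_mod_cast hn
  have hk4 : 4 * k ^ 2 ≤ n := by
    exact_mod_cast four_mul_sq_le (by linarith) (Nat.cast_nonneg k) hkn
  have herror := sq_mul_add_le_pow_three_mul (by exact_mod_cast hk) (by linarith) hkn
  refine (hMP n k hn hk4).trans (mul_le_mul_of_nonneg_right ?_ (Real.exp_pos _).le)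
  linear_combination C * herror

end TruncatedSum

theorem MP_asymptotic (ε : ℝ) (hε : 0 < ε) :
    ∃ C : ℝ, 0 < C ∧ ∃ N : ℕ, ∀ n : ℕ, N ≤ n → ∀ k : ℕ, 0 < k →
      (k : ℝ) ≤ (n : ℝ) ^ ((1 : ℝ) / 8 - ε) →
      |(MP k n : ℝ) -
          π / 16 * k * (n : ℝ) ^ (-(3 : ℝ) / 2) * Real.exp (π * Real.sqrt n / Real.sqrt 2)| ≤
        C * k ^ 3 * (n : ℝ) ^ (-(7 : ℝ) / 4) * Real.exp (π * Real.sqrt n / Real.sqrt 2) := by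
  obtain ⟨C, hC, hMP⟩ := MP_asymptotic_general
  exact ⟨C, hC, 64, fun n hn k hk hkn ↦ hMP n hn k hk <| hkn.trans <|
    Real.rpow_le_rpow_of_exponent_le (by exact_mod_cast (by omega : 1 ≤ n)) (by linarith)⟩
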